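/- Let V : ℝⁿ → ℝ be C² with e^{-V} integrable, and let μ be the probability measure with density proportional to e^{-V}. Let ρ : ℝⁿ → ℝ be Lipschitz with Lipschitz constant ‖ρ‖_Lip > 0 such that ⟨u, Hess V(x) u⟩ ≥ ρ(x)‖u‖² for all x, u ∈ ℝⁿ, and suppose ρ(x) ≥ ρ₀ > 0 for all x. Set m = ∫ρ dμ and ε' = ((m − ρ₀) + 4‖ρ‖²_Lip/ρ₀²)·(1 − √(1 − (m − ρ₀)²/((m − ρ₀) + 4‖ρ‖²_Lip/ρ₀²)²)). Then for every smooth compactly supported f : ℝⁿ → ℝ, Var_μ(f) ≤ (1/(ρ₀ + ε')) ∫‖∇f‖² dμ. -/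

import Mathlib

open MeasureTheory Real Set
open scoped ENNReal RealInnerProductSpace

/-!
Write `μ ∝ exp (-V)` and `L u = Δ u - ⟪∇ V, ∇ u⟫`. A function in `L²(μ)` orthogonal to every `L ζ`,
with `ζ` a test function, is constant (mollify it and use a Caccioppoli estimate), so the functions
`L ζ` are dense in the centred part of `L²(μ)`. By duality a spectral gap `Λ` therefore follows from
`Λ * ∫ ‖∇ u‖² ≤ ∫ (L u)²` for test functions `u`. By Bochner's identity the right-hand side is at
least `∑ i, (∫ ‖∇ gᵢ‖² + ∫ ρ gᵢ²)` with `gᵢ = ∂ᵢ u`; bounding `ρ` below by `ρ₀` gives the gap `ρ₀`.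

If a gap `Λ ≥ ρ₀` is already known, the Poincaré inequality applies to `gᵢ` and to `ρ` itself, whose
variance is at most `‖ρ‖²_Lip / Λ`. Splitting `gᵢ` into mean and fluctuation, and using only the
fraction `θ` of `ρ - ρ₀`, then yields a strictly larger gap as long as
`Λ < ρ₀ + θ (m - ρ₀) - θ² ‖ρ‖²_Lip / ρ₀²`. A continuity argument in `Λ` reaches this value, which
dominates `ρ₀ + ε'` for a suitable `θ ∈ [0, 1]`.
-/

section

open Filter InnerProductSpace ProbabilityTheory
open scoped ContDiff Convolution Gradient Laplacian NNReal Topology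

section Calculus

variable {E : Type*} [NormedAddCommGroup E] [NormedSpace ℝ E] {v w x : E} {f g : E → ℝ}

/-- The derivative of `f` in the fixed direction `v`, as a function of the base point. -/
noncomputable def dirDeriv (v : E) (f : E → ℝ) (x : E) : ℝ :=
  fderiv ℝ f x v

theorem contDiff_dirDeriv {k m : ℕ∞ω} (hf : ContDiff ℝ m f) (hkm : k + 1 ≤ m) :
    ContDiff ℝ k (dirDeriv v f) :=
  (hf.fderiv_right hkm).clm_apply contDiff_const

theorem continuous_dirDeriv (hf : ContDiff ℝ 1 f) : Continuous (dirDeriv v f) :=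
  (contDiff_dirDeriv (k := 0) hf (by simp)).continuous

theorem hasCompactSupport_dirDeriv (hf : HasCompactSupport f) :
    HasCompactSupport (dirDeriv v f) :=
  hf.fderiv_apply ℝ v

theorem dirDeriv_sub (hf : DifferentiableAt ℝ f x) (hg : DifferentiableAt ℝ g x) :
    dirDeriv v (fun y ↦ f y - g y) x = dirDeriv v f x - dirDeriv v g x := by
  simp [dirDeriv, fderiv_fun_sub hf hg]

theorem dirDeriv_sum {ι : Type*} {s : Finset ι} {F : ι → E → ℝ}
    (hF : ∀ i ∈ s, DifferentiableAt ℝ (F i) x) :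
    dirDeriv v (fun y ↦ ∑ i ∈ s, F i y) x = ∑ i ∈ s, dirDeriv v (F i) x := by
  simp [dirDeriv, fderiv_fun_sum hF]

theorem dirDeriv_mul (hf : DifferentiableAt ℝ f x) (hg : DifferentiableAt ℝ g x) :
    dirDeriv v (fun y ↦ f y * g y) x = dirDeriv v f x * g x + f x * dirDeriv v g x := by
  simp only [dirDeriv, fderiv_fun_mul hf hg, _root_.add_apply, _root_.smul_apply, smul_eq_mul]
  ring

theorem dirDeriv_dirDeriv (hf : ContDiff ℝ 2 f) :
    dirDeriv v (dirDeriv w f) x = iteratedFDeriv ℝ 2 f x ![v, w] := by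
  have hf' : DifferentiableAt ℝ (fderiv ℝ f) x :=
    (hf.fderiv_right le_rfl).differentiable one_ne_zero x
  have h := (hf'.hasFDerivAt.clm_apply (hasFDerivAt_const w x)).fderiv
  rw [iteratedFDeriv_two_apply, dirDeriv]
  change fderiv ℝ (fun y ↦ fderiv ℝ f y w) x v = _
  simp [h]

theorem dirDeriv_comm (hf : ContDiff ℝ 2 f) :
    dirDeriv v (dirDeriv w f) = dirDeriv w (dirDeriv v f) := by
  ext x
  simp only [dirDeriv_dirDeriv hf, iteratedFDeriv_two_apply]
  exact hf.contDiffAt.isSymmSndFDerivAt (by simp) v w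

end Calculus

section Gradient

variable {E : Type*} [NormedAddCommGroup E] [InnerProductSpace ℝ E] [CompleteSpace E]
  {ι : Type*} [Fintype ι] (b : OrthonormalBasis ι ℝ E) (f g : E → ℝ) (x : E)

theorem inner_gradient_eq_sum : ⟪∇ f x, ∇ g x⟫ = ∑ i, dirDeriv (b i) f x * dirDeriv (b i) g x := by
  rw [← b.sum_inner_mul_inner]
  simp [dirDeriv]

theorem sq_norm_gradient_eq_sum : ‖∇ f x‖ ^ 2 = ∑ i, dirDeriv (b i) f x ^ 2 := by
  rw [← real_inner_self_eq_norm_sq, inner_gradient_eq_sum b]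
  simp only [sq]

theorem norm_gradient_eq_norm_fderiv : ‖∇ f x‖ = ‖fderiv ℝ f x‖ := by
  simp [gradient]

theorem sq_dirDeriv_le {v x : E} : dirDeriv v f x ^ 2 ≤ ‖∇ f x‖ ^ 2 * ‖v‖ ^ 2 := by
  rw [← mul_pow, norm_gradient_eq_norm_fderiv, ← sq_abs]
  gcongr
  exact (fderiv ℝ f x).le_opNorm v

theorem continuous_gradient {f : E → ℝ} (hf : ContDiff ℝ 1 f) : Continuous (∇ f) :=
  (toDual ℝ E).symm.continuous.comp (hf.continuous_fderiv one_ne_zero)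

theorem gradient_eq_zero_of_notMem_tsupport {f : E → ℝ} {x : E} (hx : x ∉ tsupport f) :
    ∇ f x = 0 := by
  simp [(notMem_tsupport_iff_eventuallyEq.mp hx).gradient_eq, Pi.zero_def]

theorem hasCompactSupport_gradient {f : E → ℝ} (hf : HasCompactSupport f) :
    HasCompactSupport (∇ f) :=
  (hf.fderiv ℝ).comp_left (map_zero (toDual ℝ E).symm)

variable {f g : E → ℝ} {x : E}

theorem gradient_add (hf : DifferentiableAt ℝ f x) (hg : DifferentiableAt ℝ g x) :
    ∇ (fun y ↦ f y + g y) x = ∇ f x + ∇ g x := by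
  simp [gradient, fderiv_fun_add hf hg]

theorem gradient_mul (hf : DifferentiableAt ℝ f x) (hg : DifferentiableAt ℝ g x) :
    ∇ (fun y ↦ f y * g y) x = f x • ∇ g x + g x • ∇ f x := by
  simp [gradient, fderiv_fun_mul hf hg]

theorem gradient_sq_mul (hf : DifferentiableAt ℝ f x) (hg : DifferentiableAt ℝ g x) :
    ∇ (fun y ↦ f y ^ 2 * g y) x = f x ^ 2 • ∇ g x + (2 * f x * g x) • ∇ f x := by
  simp_rw [sq (f _)]
  rw [gradient_mul (hf.fun_mul hf) hg, gradient_mul hf hf]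
  module

theorem gradient_exp (hf : DifferentiableAt ℝ f x) :
    ∇ (fun y ↦ exp (f y)) x = exp (f x) • ∇ f x := by
  simp [gradient, hf.hasFDerivAt.exp.fderiv]

theorem gradient_neg : ∇ (fun y ↦ -f y) x = -∇ f x := by
  simp [gradient, fderiv_fun_neg]

end Gradient

section Green

variable {E : Type*} [NormedAddCommGroup E] [InnerProductSpace ℝ E] [FiniteDimensional ℝ E]
  [MeasurableSpace E] [BorelSpace E] {f g u : E → ℝ}

theorem integral_mul_dirDeriv {v : E} (hf : ContDiff ℝ 1 f) (hg : ContDiff ℝ 1 g)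
    (hgc : HasCompactSupport g) :
    ∫ x, f x * dirDeriv v g x = -∫ x, dirDeriv v f x * g x := by
  refine integral_mul_fderiv_eq_neg_fderiv_mul_of_integrable ?_ ?_ ?_
    (fun x _ ↦ hf.differentiable one_ne_zero x) fun x _ ↦ hg.differentiable one_ne_zero x
  · exact ((continuous_dirDeriv hf).mul hg.continuous).integrable_of_hasCompactSupport hgc.mul_left
  · exact (hf.continuous.mul (continuous_dirDeriv hg)).integrable_of_hasCompactSupport
      (hasCompactSupport_dirDeriv hgc).mul_left
  · exact (hf.continuous.mul hg.continuous).integrable_of_hasCompactSupport hgc.mul_left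

theorem integral_mul_laplacian (hf : ContDiff ℝ 1 f) (hu : ContDiff ℝ 2 u)
    (huc : HasCompactSupport u) : ∫ x, f x * Δ u x = -∫ x, ⟪∇ f x, ∇ u x⟫ := by
  let b := stdOrthonormalBasis ℝ E
  have hdu (i) : ContDiff ℝ 1 (dirDeriv (b i) u) := contDiff_dirDeriv hu le_rfl
  have hduc (i) : HasCompactSupport (dirDeriv (b i) u) := hasCompactSupport_dirDeriv huc
  simp_rw [laplacian_eq_iteratedFDeriv_orthonormalBasis u b, ← dirDeriv_dirDeriv hu,
    inner_gradient_eq_sum b, Finset.mul_sum]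
  rw [integral_finsetSum, integral_finsetSum, ← Finset.sum_neg_distrib]
  · exact Finset.sum_congr rfl fun i _ ↦ integral_mul_dirDeriv hf (hdu i) (hduc i)
  · exact fun i _ ↦ ((continuous_dirDeriv hf).mul
      (hdu i).continuous).integrable_of_hasCompactSupport (hduc i).mul_left
  · exact fun i _ ↦ (hf.continuous.mul
      (continuous_dirDeriv (hdu i))).integrable_of_hasCompactSupport
      (hasCompactSupport_dirDeriv (hduc i)).mul_left

end Green

section Generator

variable {E : Type*} [NormedAddCommGroup E] [InnerProductSpace ℝ E] [FiniteDimensional ℝ E]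
  {V f u : E → ℝ} {v x : E}

theorem continuous_laplacian (hu : ContDiff ℝ 2 u) : Continuous (Δ u) := by
  let b := stdOrthonormalBasis ℝ E
  rw [laplacian_eq_iteratedFDeriv_orthonormalBasis u b]
  simp_rw [← dirDeriv_dirDeriv hu]
  exact continuous_finsetSum _ fun i _ ↦ continuous_dirDeriv (contDiff_dirDeriv hu le_rfl)

theorem hasCompactSupport_laplacian (hu : HasCompactSupport u) : HasCompactSupport (Δ u) :=
  hu.mono' fun x hx ↦ by
    contrapose! hx
    rw [Function.notMem_support, (laplacian_congr_nhds (f₂ := fun _ ↦ 0)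
      (notMem_tsupport_iff_eventuallyEq.mp hx)).self_of_nhds]
    simp

/-- The generator `L u = Δu - ⟨∇V, ∇u⟩` of the Langevin diffusion with potential `V`; it is
symmetric with respect to the measure with density proportional to `exp (-V)`. -/
noncomputable def generator (V u : E → ℝ) (x : E) : ℝ :=
  Δ u x - ⟪∇ V x, ∇ u x⟫

theorem generator_eq_sum {ι : Type*} [Fintype ι] (b : OrthonormalBasis ι ℝ E)
    (hu : ContDiff ℝ 2 u) :
    generator V u = fun x ↦
      ∑ i, (dirDeriv (b i) (dirDeriv (b i) u) x - dirDeriv (b i) V x * dirDeriv (b i) u x) := by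
  ext x
  simp only [generator, laplacian_eq_iteratedFDeriv_orthonormalBasis u b,
    inner_gradient_eq_sum b, dirDeriv_dirDeriv hu, Finset.sum_sub_distrib]

theorem contDiff_generator (hV : ContDiff ℝ 2 V) (hu : ContDiff ℝ 3 u) :
    ContDiff ℝ 1 (generator V u) := by
  let b := stdOrthonormalBasis ℝ E
  rw [generator_eq_sum b (hu.of_le (by norm_num))]
  have hu' (i) : ContDiff ℝ 2 (dirDeriv (b i) u) := contDiff_dirDeriv hu (by norm_num)
  exact ContDiff.sum fun i _ ↦ (contDiff_dirDeriv (hu' i) (by norm_num)).sub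
    ((contDiff_dirDeriv hV (by norm_num)).mul ((hu' i).of_le (by norm_num)))

theorem continuous_generator (hV : ContDiff ℝ 1 V) (hu : ContDiff ℝ 2 u) :
    Continuous (generator V u) :=
  (continuous_laplacian hu).sub
    ((continuous_gradient hV).inner (continuous_gradient (hu.of_le (by norm_num))))

theorem hasCompactSupport_generator (hu : HasCompactSupport u) :
    HasCompactSupport (generator V u) :=
  (hasCompactSupport_laplacian hu).sub
    ((hasCompactSupport_gradient hu).mono fun x hx h0 ↦ hx (by simp [h0]))

theorem dirDeriv_generator (hV : ContDiff ℝ 2 V) (hu : ContDiff ℝ 3 u) :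
    dirDeriv v (generator V u) x =
      generator V (dirDeriv v u) x - iteratedFDeriv ℝ 2 V x ![v, ∇ u x] := by
  let b := stdOrthonormalBasis ℝ E
  have hu2 : ContDiff ℝ 2 u := hu.of_le (by norm_num)
  have hdu (w) : ContDiff ℝ 2 (dirDeriv w u) := contDiff_dirDeriv hu (by norm_num)
  have hdu' (w) : DifferentiableAt ℝ (dirDeriv w u) x := (hdu w).differentiable two_ne_zero x
  have hddu (w) : DifferentiableAt ℝ (dirDeriv w (dirDeriv w u)) x :=
    (contDiff_dirDeriv (hdu w) le_rfl).differentiable one_ne_zero x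
  have hdV (w) : DifferentiableAt ℝ (dirDeriv w V) x :=
    (contDiff_dirDeriv hV le_rfl).differentiable one_ne_zero x
  have hess : iteratedFDeriv ℝ 2 V x ![v, ∇ u x] =
      ∑ i, dirDeriv v (dirDeriv (b i) V) x * dirDeriv (b i) u x := by
    simp_rw [dirDeriv_dirDeriv hV]
    conv_lhs => rw [← b.sum_repr' (∇ u x)]
    simp [iteratedFDeriv_two_apply, dirDeriv, mul_comm]
  have hterm (i) : DifferentiableAt ℝ
      (fun y ↦ dirDeriv (b i) (dirDeriv (b i) u) y - dirDeriv (b i) V y * dirDeriv (b i) u y) x :=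
    (hddu (b i)).fun_sub ((hdV (b i)).fun_mul (hdu' (b i)))
  rw [generator_eq_sum b hu2, generator_eq_sum b (hdu v), hess,
    dirDeriv_sum fun i _ ↦ hterm i, ← Finset.sum_sub_distrib]
  refine Finset.sum_congr rfl fun i _ ↦ ?_
  rw [dirDeriv_sub (hddu (b i)) ((hdV (b i)).fun_mul (hdu' (b i))),
    dirDeriv_mul (hdV (b i)) (hdu' (b i)), dirDeriv_comm (hdu (b i)), dirDeriv_comm hu2]
  ring

theorem sum_dirDeriv_mul_iteratedFDeriv_two {ι : Type*} [Fintype ι] (b : OrthonormalBasis ι ℝ E) :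
    ∑ i, dirDeriv (b i) u x * iteratedFDeriv ℝ 2 V x ![b i, ∇ u x] =
      iteratedFDeriv ℝ 2 V x ![∇ u x, ∇ u x] := by
  have h : ∑ i, dirDeriv (b i) u x • b i = ∇ u x := by
    simpa [dirDeriv, real_inner_comm] using b.sum_repr' (∇ u x)
  simp only [iteratedFDeriv_two_apply, Matrix.cons_val_zero, Matrix.cons_val_one]
  conv_rhs => rw [← congrArg (fderiv ℝ (fderiv ℝ V) x) h]
  simp

end Generator

section GibbsMeasure

variable {E : Type*} [NormedAddCommGroup E] [InnerProductSpace ℝ E] [FiniteDimensional ℝ E]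
  [MeasurableSpace E] [BorelSpace E] {V f u : E → ℝ}

theorem integrable_iteratedFDeriv_two_gradient {μ : Measure E} [IsFiniteMeasureOnCompacts μ]
    (hV : ContDiff ℝ 2 V) (hu : ContDiff ℝ 1 u) (huc : HasCompactSupport u) :
    Integrable (fun x ↦ iteratedFDeriv ℝ 2 V x ![∇ u x, ∇ u x]) μ := by
  have hdu := continuous_gradient hu
  refine Continuous.integrable_of_hasCompactSupport ?_ ((hasCompactSupport_gradient huc).mono
    fun x hx h0 ↦ hx (by simp [iteratedFDeriv_two_apply, h0]))
  simp only [iteratedFDeriv_two_apply]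
  exact (((hV.fderiv_right le_rfl).continuous_fderiv one_ne_zero).clm_apply hdu).clm_apply hdu

/-- The Gibbs measure of the potential `V`: the probability measure with Lebesgue density
proportional to `exp (-V)`. It is the zero measure if `exp (-V)` is not integrable. -/
noncomputable def gibbsMeasure (V : E → ℝ) : Measure E :=
  volume.tilted fun x ↦ -V x

instance : IsZeroOrProbabilityMeasure (gibbsMeasure V) :=
  inferInstanceAs (IsZeroOrProbabilityMeasure (volume.tilted fun x ↦ -V x))

theorem integral_gibbsMeasure (f : E → ℝ) :
    ∫ x, f x ∂gibbsMeasure V = (∫ x, exp (-V x))⁻¹ * ∫ x, f x * exp (-V x) := by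
  rw [gibbsMeasure, integral_tilted, ← integral_const_mul]
  refine integral_congr_ae (.of_forall fun x ↦ ?_)
  simp only [smul_eq_mul]
  ring

theorem integral_mul_generator (hV : ContDiff ℝ 1 V) (hf : ContDiff ℝ 1 f)
    (hu : ContDiff ℝ 2 u) (huc : HasCompactSupport u) :
    ∫ x, f x * generator V u x ∂gibbsMeasure V = -∫ x, ⟪∇ f x, ∇ u x⟫ ∂gibbsMeasure V := by
  have hexp : ContDiff ℝ 1 fun x ↦ exp (-V x) := hV.neg.exp
  have hfe : ContDiff ℝ 1 fun x ↦ f x * exp (-V x) := hf.mul hexp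
  have hgrad (x : E) : ∇ (fun x ↦ f x * exp (-V x)) x =
      exp (-V x) • ∇ f x - (f x * exp (-V x)) • ∇ V x := by
    rw [gradient_mul (hf.differentiable one_ne_zero x) (hexp.differentiable one_ne_zero x),
      gradient_exp (hV.neg.differentiable one_ne_zero x), gradient_neg]
    module
  have hpt (x : E) : f x * exp (-V x) * Δ u x + ⟪∇ (fun x ↦ f x * exp (-V x)) x, ∇ u x⟫ =
      f x * generator V u x * exp (-V x) + ⟪∇ f x, ∇ u x⟫ * exp (-V x) := by
    simp only [hgrad, generator, inner_sub_left, real_inner_smul_left]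
    ring
  have hu1 : Continuous (∇ u) := continuous_gradient (hu.of_le (by norm_num))
  have hinner {w : E → ℝ} (hw : ContDiff ℝ 1 w) : Continuous fun x ↦ ⟪∇ w x, ∇ u x⟫ :=
    (continuous_gradient hw).inner hu1
  have hinnerc (w : E → ℝ) : HasCompactSupport fun x ↦ ⟪∇ w x, ∇ u x⟫ :=
    (hasCompactSupport_gradient huc).mono fun x hx h0 ↦ hx (by simp [h0])
  have hgreen := integral_mul_laplacian hfe hu huc
  rw [← add_eq_zero_iff_eq_neg, ← integral_add] at hgreen
  · rw [← add_eq_zero_iff_eq_neg, integral_gibbsMeasure, integral_gibbsMeasure, ← mul_add,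
      ← integral_add]
    · simp_rw [← hpt, hgreen, mul_zero]
    · exact ((hf.continuous.mul (continuous_generator hV hu)).mul
        hexp.continuous).integrable_of_hasCompactSupport
        (hasCompactSupport_generator huc).mul_left.mul_right
    · exact ((hinner hf).mul hexp.continuous).integrable_of_hasCompactSupport (hinnerc f).mul_right
  · exact (hfe.continuous.mul (continuous_laplacian hu)).integrable_of_hasCompactSupport
      (hasCompactSupport_laplacian huc).mul_left
  · exact (hinner hfe).integrable_of_hasCompactSupport (hinnerc _)

theorem integral_generator_sq {ι : Type*} [Fintype ι] (b : OrthonormalBasis ι ℝ E)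
    (hV : ContDiff ℝ 2 V) (hu : ContDiff ℝ 3 u) (huc : HasCompactSupport u) :
    ∫ x, generator V u x ^ 2 ∂gibbsMeasure V =
      ∑ i, ∫ x, ‖∇ (dirDeriv (b i) u) x‖ ^ 2 ∂gibbsMeasure V +
        ∫ x, iteratedFDeriv ℝ 2 V x ![∇ u x, ∇ u x] ∂gibbsMeasure V := by
  have hV1 : ContDiff ℝ 1 V := hV.of_le (by norm_num)
  have hL : ContDiff ℝ 1 (generator V u) := contDiff_generator hV hu
  have hdu (i) : ContDiff ℝ 2 (dirDeriv (b i) u) := contDiff_dirDeriv hu (by norm_num)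
  have hduc (i) : HasCompactSupport (dirDeriv (b i) u) := hasCompactSupport_dirDeriv huc
  have hpt (x : E) : ⟪∇ (generator V u) x, ∇ u x⟫ =
      ∑ i, dirDeriv (b i) u x * generator V (dirDeriv (b i) u) x -
        iteratedFDeriv ℝ 2 V x ![∇ u x, ∇ u x] := by
    rw [inner_gradient_eq_sum b,
      ← sum_dirDeriv_mul_iteratedFDeriv_two b, ← Finset.sum_sub_distrib]
    refine Finset.sum_congr rfl fun i _ ↦ ?_
    rw [dirDeriv_generator hV hu]
    ring
  have hint (i) : Integrable (fun x ↦ dirDeriv (b i) u x * generator V (dirDeriv (b i) u) x)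
      (gibbsMeasure V) :=
    ((hdu i).continuous.mul (continuous_generator hV1 (hdu i))).integrable_of_hasCompactSupport
      (hduc i).mul_right
  simp_rw [sq (generator V u _)]
  rw [integral_mul_generator hV1 hL (hu.of_le (by norm_num)) huc]
  simp_rw [hpt]
  rw [integral_sub (integrable_finsetSum _ fun i _ ↦ hint i)
      (integrable_iteratedFDeriv_two_gradient hV (hu.of_le (by norm_num)) huc),
    integral_finsetSum _ fun i _ ↦ hint i, neg_sub, sub_eq_neg_add, ← Finset.sum_neg_distrib]
  congr 1
  refine Finset.sum_congr rfl fun i _ ↦ ?_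
  simp [integral_mul_generator hV1 ((hdu i).of_le (by norm_num)) (hdu i) (hduc i)]

end GibbsMeasure

section Mollification

variable {E : Type*} [NormedAddCommGroup E] [InnerProductSpace ℝ E] [FiniteDimensional ℝ E]
  [MeasurableSpace E] [BorelSpace E] {F G : Type*} [NormedAddCommGroup F] [NormedSpace ℝ F]
  [NormedAddCommGroup G] [NormedSpace ℝ G] {φ : ContDiffBump (0 : E)} {g : E → F} {p q : E → ℝ}
  {x : E}

/-- The mollification of `g` by the normalized bump function `φ`. -/
noncomputable def mollify (φ : ContDiffBump (0 : E)) (g : E → F) : E → F :=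
  φ.normed volume ⋆[ContinuousLinearMap.lsmul ℝ ℝ, volume] g

theorem mollify_apply : mollify φ g x = ∫ t, φ.normed volume t • g (x - t) := by
  simp [mollify, convolution_def]

theorem mollify_nonneg (hp : ∀ x, 0 ≤ p x) (x : E) : 0 ≤ mollify φ p x := by
  rw [mollify_apply]
  exact integral_nonneg fun t ↦ mul_nonneg (φ.nonneg_normed t) (hp _)

theorem integrable_normed_smul (hg : LocallyIntegrable g) (x : E) :
    Integrable fun t ↦ φ.normed volume t • g (x - t) :=
  φ.hasCompactSupport_normed.convolutionExists_left (ContinuousLinearMap.lsmul ℝ ℝ)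
    φ.continuous_normed hg x

theorem contDiff_mollify (hg : LocallyIntegrable g) : ContDiff ℝ ∞ (mollify φ g) :=
  φ.hasCompactSupport_normed.contDiff_convolution_left _ φ.contDiff_normed hg

theorem hasCompactSupport_mollify (hg : HasCompactSupport g) :
    HasCompactSupport (mollify φ g) :=
  φ.hasCompactSupport_normed.convolution _ hg

theorem mollify_clm_comp [CompleteSpace F] [CompleteSpace G] (L : F →L[ℝ] G)
    (hg : LocallyIntegrable g) : mollify φ (fun x ↦ L (g x)) = fun x ↦ L (mollify φ g x) := by
  ext x
  simp only [mollify_apply, ← L.integral_comp_comm (integrable_normed_smul hg x), map_smul]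

theorem fderiv_mollify (hg : ContDiff ℝ 1 g) (hgc : HasCompactSupport g) :
    fderiv ℝ (mollify φ g) = mollify φ (fderiv ℝ g) := by
  ext1 x
  exact (hgc.hasFDerivAt_convolution_right (ContinuousLinearMap.lsmul ℝ ℝ)
    (φ.continuous_normed.locallyIntegrable) hg x).fderiv

theorem dirDeriv_mollify {v : E} (hp : ContDiff ℝ 1 p) (hpc : HasCompactSupport p) :
    dirDeriv v (mollify φ p) = mollify φ (dirDeriv v p) := by
  have h := mollify_clm_comp (φ := φ) (ContinuousLinearMap.apply ℝ ℝ v)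
    (hp.continuous_fderiv one_ne_zero).locallyIntegrable
  ext x
  simpa [dirDeriv, fderiv_mollify hp hpc] using! (congrFun h x).symm

theorem gradient_mollify (hp : ContDiff ℝ 1 p) (hpc : HasCompactSupport p) :
    ∇ (mollify φ p) = mollify φ (∇ p) := by
  have h := mollify_clm_comp (φ := φ)
    (toDual ℝ E).symm.toContinuousLinearEquiv.toContinuousLinearMap
    (hp.continuous_fderiv one_ne_zero).locallyIntegrable
  ext1 x
  simpa [gradient, fderiv_mollify hp hpc] using! (congrFun h x).symm

theorem laplacian_mollify (hp : ContDiff ℝ 2 p) (hpc : HasCompactSupport p) :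
    Δ (mollify φ p) = mollify φ (Δ p) := by
  let b := stdOrthonormalBasis ℝ E
  let trace : (E →L[ℝ] E →L[ℝ] ℝ) →L[ℝ] ℝ :=
    ∑ i, (ContinuousLinearMap.apply ℝ ℝ (b i)).comp
      (ContinuousLinearMap.apply ℝ (E →L[ℝ] ℝ) (b i))
  have htrace (f : E → ℝ) : Δ f = fun x ↦ trace (fderiv ℝ (fderiv ℝ f) x) := by
    ext x
    simp [laplacian_eq_iteratedFDeriv_orthonormalBasis f b, iteratedFDeriv_two_apply, trace]
  have hp' : ContDiff ℝ 1 (fderiv ℝ p) := hp.fderiv_right le_rfl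
  rw [htrace, htrace, fderiv_mollify (hp.of_le (by norm_num)) hpc,
    fderiv_mollify hp' (hpc.fderiv ℝ),
    mollify_clm_comp trace (hp'.continuous_fderiv one_ne_zero).locallyIntegrable]

theorem integral_inner_mollify {H : Type*} [NormedAddCommGroup H] [InnerProductSpace ℝ H]
    [CompleteSpace H] {a g : E → H} (ha : Continuous a) (hac : HasCompactSupport a)
    (hg : LocallyIntegrable g) :
    ∫ x, ⟪a x, mollify φ g x⟫ = ∫ x, ⟪mollify φ a x, g x⟫ := by
  let B : H →L[ℝ] H →L[ℝ] ℝ := innerSL ℝ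
  let S : ℝ →L[ℝ] H →L[ℝ] H := ContinuousLinearMap.lsmul ℝ ℝ
  have ha' : Continuous fun x ↦ a (-x) := ha.comp continuous_neg
  have hac' : HasCompactSupport fun x ↦ a (-x) := hac.comp_homeomorph (Homeomorph.neg E)
  have hgn : LocallyIntegrable fun x ↦ ‖g x‖ := fun x ↦ (hg x).norm
  have hassoc := convolution_assoc (μ := volume) (ν := volume) (x₀ := (0 : E)) S.flip B B S
    (f := fun x ↦ a (-x)) (g := φ.normed volume) (k := g)
    (fun x y z ↦ by simp [S, B])
    ha'.aestronglyMeasurable φ.continuous_normed.aestronglyMeasurable hg.aestronglyMeasurable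
    (.of_forall fun y ↦ hac'.convolutionExists_left _ ha'
      φ.continuous_normed.locallyIntegrable y)
    (.of_forall fun y ↦ φ.hasCompactSupport_normed.norm.convolutionExists_left _
      φ.continuous_normed.norm hgn y)
    (hac'.norm.convolutionExists_left _ ha'.norm
      (φ.hasCompactSupport_normed.norm.continuous_convolution_left _ φ.continuous_normed.norm
        hgn).locallyIntegrable 0)
  have hreflect (t : E) : ((fun x ↦ a (-x)) ⋆[S.flip, volume] φ.normed volume) (-t) =
      mollify φ a t := by
    rw [convolution_flip, mollify_apply, convolution_def, ← integral_neg_eq_self]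
    simp [S, φ.normed_neg, sub_eq_add_neg, add_comm]
  have hl := integral_neg_eq_self
    (fun t ↦ ⟪((fun x ↦ a (-x)) ⋆[S.flip, volume] φ.normed volume) t, g (-t)⟫) volume
  have hr := integral_neg_eq_self (fun t ↦ ⟪a (-t), mollify φ g (-t)⟫) volume
  simp only [hreflect, neg_neg] at hl hr
  rw [hl, hr]
  simpa [convolution_def, B, mollify, S, innerSL_apply_apply ℝ] using hassoc.symm

theorem integral_mul_mollify {a : E → ℝ} (ha : Continuous a) (hac : HasCompactSupport a)
    (hp : LocallyIntegrable p) : ∫ x, a x * mollify φ p x = ∫ x, mollify φ a x * p x := by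
  simpa [mul_comm] using integral_inner_mollify ha hac hp

theorem integral_mollify (hp : Integrable p) : ∫ x, mollify φ p x = ∫ x, p x := by
  rw [mollify, integral_convolution _ φ.integrable_normed hp, φ.integral_normed]
  simp

theorem integrable_mollify (hp : Integrable p) : Integrable (mollify φ p) :=
  φ.integrable_normed.integrable_convolution _ hp

end Mollification

section SmallBumps

variable {E : Type*} [NormedAddCommGroup E] {η : ℝ}

/-- The filter of bump functions around the origin whose supports shrink to a point. -/
noncomputable def smallBumps : Filter (ContDiffBump (0 : E)) :=
  comap ContDiffBump.rOut (𝓝 0)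

instance : (smallBumps (E := E)).NeBot := by
  refine comap_neBot fun s hs ↦ ?_
  obtain ⟨δ, hδ, hδs⟩ := Metric.mem_nhds_iff.mp hs
  refine ⟨⟨δ / 4, δ / 2, by positivity, by linarith⟩, hδs ?_⟩
  simp only [Metric.mem_ball, Real.dist_eq, sub_zero, abs_of_pos (half_pos hδ), half_lt_self hδ]

instance : (smallBumps (E := E)).IsCountablyGenerated :=
  comap.isCountablyGenerated _ _

theorem eventually_rOut_lt (hη : 0 < η) : ∀ᶠ φ in smallBumps (E := E), φ.rOut < η :=
  tendsto_comap.eventually (gt_mem_nhds hη)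

theorem eventually_forall_dist_lt_of_continuous {F : Type*} [PseudoMetricSpace F] {g : E → F}
    {K : Set E} (hg : Continuous g) (hK : IsCompact K) (hη : 0 < η) :
    ∀ᶠ φ in smallBumps (E := E), ∀ x ∈ K, ∀ y ∈ Metric.ball x φ.rOut, dist (g y) (g x) < η := by
  obtain ⟨δ, hδ, hclose⟩ := Metric.mem_uniformity_dist.mp
    (hK.uniformContinuousAt_of_continuousAt g (fun _ _ ↦ hg.continuousAt)
      (Metric.dist_mem_uniformity hη))
  filter_upwards [eventually_rOut_lt hδ] with φ hφ x hx y hy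
  rw [dist_comm]
  exact hclose (by rw [dist_comm]; exact (Metric.mem_ball.mp hy).trans hφ) hx

end SmallBumps

section MollifyLimit

variable {E : Type*} [NormedAddCommGroup E] [InnerProductSpace ℝ E] [FiniteDimensional ℝ E]
  [MeasurableSpace E] [BorelSpace E] {a p : E → ℝ}

theorem eventually_abs_mollify_sub_le (ha : Continuous a) (hac : HasCompactSupport a) {η : ℝ}
    (hη : 0 < η) : ∀ᶠ φ in smallBumps (E := E), ∀ x,
      |mollify φ a x - a x| ≤ (Metric.cthickening 1 (tsupport a)).indicator (fun _ ↦ η) x := by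
  let K := Metric.cthickening 1 (tsupport a)
  have hK : IsCompact K := hac.isCompact.cthickening
  filter_upwards [eventually_forall_dist_lt_of_continuous ha hK hη, eventually_rOut_lt one_pos]
    with φ hclose hφ x
  refine φ.dist_normed_convolution_le ha.aestronglyMeasurable fun y hy ↦ ?_
  by_cases hx : x ∈ K
  · simpa [K, hx] using (hclose x hx y hy).le
  · have hay (z) (hz : z ∈ Metric.ball x φ.rOut) : a z = 0 := by
      by_contra h
      refine hx (Metric.mem_cthickening_of_dist_le x z 1 _ (subset_tsupport a h) ?_)
      rw [dist_comm]
      exact ((Metric.mem_ball.mp hz).trans hφ).le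
    simp [K, hx, hay y hy, hay x (Metric.mem_ball_self φ.rOut_pos)]

theorem tendsto_integral_mul_mollify (ha : Continuous a) (hac : HasCompactSupport a)
    (hp : LocallyIntegrable p) :
    Tendsto (fun φ ↦ ∫ x, a x * mollify φ p x) smallBumps (𝓝 (∫ x, a x * p x)) := by
  let K := Metric.cthickening 1 (tsupport a)
  have hK : IsCompact K := hac.isCompact.cthickening
  have hpK : IntegrableOn (fun x ↦ |p x|) K := (hp.integrableOn_isCompact hK).abs
  rw [Metric.tendsto_nhds]
  intro ε hε
  let C := ∫ x in K, |p x|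
  have hC : 0 < C + 1 := add_pos_of_nonneg_of_pos (integral_nonneg fun x ↦ abs_nonneg _) one_pos
  filter_upwards [eventually_abs_mollify_sub_le ha hac (div_pos hε hC)]
    with φ hφ
  have hint {b : E → ℝ} (hb : Continuous b) (hbc : HasCompactSupport b) :
      Integrable fun x ↦ b x * p x :=
    hp.integrable_smul_left_of_hasCompactSupport hb hbc
  have hdiff : (∫ x, a x * mollify φ p x) - ∫ x, a x * p x =
      ∫ x, (mollify φ a x - a x) * p x := by
    rw [integral_mul_mollify ha hac hp, ← integral_sub]
    · simp only [sub_mul]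
    · exact hint (contDiff_mollify ha.locallyIntegrable).continuous (hasCompactSupport_mollify hac)
    · exact hint ha hac
  calc dist (∫ x, a x * mollify φ p x) (∫ x, a x * p x)
      = ‖∫ x, (mollify φ a x - a x) * p x‖ := by rw [dist_eq_norm, ← hdiff]
    _ ≤ ∫ x, K.indicator (fun x ↦ ε / (C + 1) * |p x|) x := by
      refine norm_integral_le_of_norm_le
        (IntegrableOn.integrable_indicator (hpK.const_mul _) hK.measurableSet)
        (.of_forall fun x ↦ ?_)
      rw [norm_mul, Real.norm_eq_abs, indicator_mul_left]
      exact mul_le_mul_of_nonneg_right (hφ x) (abs_nonneg _)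
    _ = ε * (C / (C + 1)) := by
      rw [integral_indicator hK.measurableSet, integral_const_mul]
      ring
    _ < ε := mul_lt_of_lt_one_right hε ((div_lt_one hC).mpr (lt_add_one C))

end MollifyLimit

section MollifyBound

variable {E : Type*} [NormedAddCommGroup E] [InnerProductSpace ℝ E] [FiniteDimensional ℝ E]
  [MeasurableSpace E] [BorelSpace E] {φ : ContDiffBump (0 : E)} {k p q : E → ℝ} {x : E}

theorem normed_mul_le_normed_mul {a b : ℝ} {t : E} (hab : ‖t‖ < φ.rOut → a ≤ b) :
    φ.normed volume t * a ≤ φ.normed volume t * b := by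
  by_cases ht : ‖t‖ < φ.rOut
  · exact mul_le_mul_of_nonneg_left (hab ht) (φ.nonneg_normed t)
  · have hφt : φ.normed volume t = 0 := by
      rw [← Function.notMem_support, φ.support_normed_eq]
      simpa using ht
    simp [hφt]

theorem mollify_le_mul_mollify {C : ℝ} (hk : LocallyIntegrable k) (hq : LocallyIntegrable q)
    (hkq : ∀ y ∈ Metric.ball x φ.rOut, k y ≤ C * q y) :
    mollify φ k x ≤ C * mollify φ q x := by
  have hCq : LocallyIntegrable fun y ↦ C * q y := hq.smul C
  have hconst : C * mollify φ q x = mollify φ (fun y ↦ C * q y) x := by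
    simp only [mollify_apply, smul_eq_mul, mul_left_comm _ C, integral_const_mul]
  rw [hconst, mollify_apply, mollify_apply]
  exact integral_mono (integrable_normed_smul hk x) (integrable_normed_smul hCq x)
    fun t ↦ normed_mul_le_normed_mul fun ht ↦ hkq (x - t) (by simpa using ht)

theorem sq_mollify_le (hk : LocallyIntegrable k) (hk2 : LocallyIntegrable fun y ↦ k y ^ 2) :
    mollify φ k x ^ 2 ≤ mollify φ (fun y ↦ k y ^ 2) x := by
  let c := mollify φ k x
  have hk' := integrable_normed_smul (φ := φ) hk x
  have hk2' := integrable_normed_smul (φ := φ) hk2 x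
  have hvar : ∫ t, φ.normed volume t * (k (x - t) - c) ^ 2 =
      mollify φ (fun y ↦ k y ^ 2) x - c ^ 2 := by
    have hexpand (t : E) : φ.normed volume t * (k (x - t) - c) ^ 2 =
        φ.normed volume t • k (x - t) ^ 2 - 2 * c * (φ.normed volume t • k (x - t)) +
          c ^ 2 * φ.normed volume t := by
      simp only [smul_eq_mul]
      ring
    simp_rw [hexpand]
    rw [integral_add (by exact hk2'.sub (hk'.const_mul _)) (φ.integrable_normed.const_mul _),
      integral_sub hk2' (hk'.const_mul _), integral_const_mul, integral_const_mul,
      φ.integral_normed, ← mollify_apply, mollify_apply (g := fun y ↦ k y ^ 2)]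
    ring
  have hnonneg : 0 ≤ ∫ t, φ.normed volume t * (k (x - t) - c) ^ 2 :=
    integral_nonneg fun t ↦ mul_nonneg (φ.nonneg_normed t) (sq_nonneg _)
  linarith

theorem norm_mollify_smul_sub_le {G : E → E} {η : ℝ} (hp : LocallyIntegrable p)
    (hG : Continuous G) (hclose : ∀ y ∈ Metric.ball x φ.rOut, dist (G y) (G x) ≤ η) :
    ‖mollify φ (fun y ↦ p y • G y) x - mollify φ p x • G x‖ ≤ η * mollify φ (fun y ↦ |p y|) x := by
  have hpG : LocallyIntegrable fun y ↦ p y • G y := hp.smul_continuous hG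
  have hpη : LocallyIntegrable fun y ↦ η * |p y| :=
    LocallyIntegrable.smul (f := fun y ↦ |p y|) (fun y ↦ (hp y).norm) η
  have hdiff : mollify φ (fun y ↦ p y • G y) x - mollify φ p x • G x =
      ∫ t, φ.normed volume t • p (x - t) • (G (x - t) - G x) := by
    rw [mollify_apply, mollify_apply, ← integral_smul_const,
      ← integral_sub (integrable_normed_smul hpG x)
        ((integrable_normed_smul hp x).smul_const _)]
    refine integral_congr_ae (.of_forall fun t ↦ ?_)
    module
  have hη : η * mollify φ (fun y ↦ |p y|) x = ∫ t, φ.normed volume t * (η * |p (x - t)|) := by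
    simp only [mollify_apply, smul_eq_mul, mul_left_comm _ η, integral_const_mul]
  rw [hdiff, hη]
  refine norm_integral_le_of_norm_le (integrable_normed_smul hpη x) (.of_forall fun t ↦ ?_)
  rw [norm_smul, Real.norm_of_nonneg (φ.nonneg_normed t), norm_smul, Real.norm_eq_abs, mul_comm η]
  refine normed_mul_le_normed_mul fun ht ↦ mul_le_mul_of_nonneg_left ?_ (abs_nonneg _)
  rw [← dist_eq_norm]
  exact hclose (x - t) (by simpa using ht)

end MollifyBound

section TestFunction

variable {E : Type*} [NormedAddCommGroup E] [NormedSpace ℝ E] {f : E → ℝ}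

/-- Smooth functions with compact support, on which weak equations for the generator are tested. -/
structure IsTestFunction (f : E → ℝ) : Prop where
  contDiff : ContDiff ℝ ∞ f
  hasCompactSupport : HasCompactSupport f

namespace IsTestFunction

theorem contDiff_nat (hf : IsTestFunction f) (k : ℕ) : ContDiff ℝ k f :=
  hf.contDiff.of_le (by exact_mod_cast le_top)

theorem memLp [MeasurableSpace E] [OpensMeasurableSpace E] {μ : Measure E}
    [IsFiniteMeasureOnCompacts μ] {p : ℝ≥0∞} (hf : IsTestFunction f) : MemLp f p μ :=
  hf.contDiff.continuous.memLp_of_hasCompactSupport hf.hasCompactSupport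

theorem memLp_gradient {E : Type*} [NormedAddCommGroup E] [InnerProductSpace ℝ E]
    [FiniteDimensional ℝ E] [MeasurableSpace E] [BorelSpace E] {μ : Measure E}
    [IsFiniteMeasureOnCompacts μ] {p : ℝ≥0∞} {f : E → ℝ} (hf : IsTestFunction f) :
    MemLp (∇ f) p μ :=
  (continuous_gradient (hf.contDiff_nat 1)).memLp_of_hasCompactSupport
    (hasCompactSupport_gradient hf.hasCompactSupport)

end IsTestFunction

end TestFunction

section WeaklyConstant

variable {E : Type*} [NormedAddCommGroup E] [InnerProductSpace ℝ E] [FiniteDimensional ℝ E]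
  [MeasurableSpace E] [BorelSpace E] {h : E → ℝ}

theorem ae_const_of_integral_mul_dirDeriv_eq_zero (hh : LocallyIntegrable h)
    (h0 : ∀ (v : E) (ζ : E → ℝ), IsTestFunction ζ → ∫ x, h x * dirDeriv v ζ x = 0) :
    ∃ c, ∀ᵐ x, h x = c := by
  have hconst (φ : ContDiffBump (0 : E)) (x : E) : mollify φ h x = mollify φ h 0 := by
    have hsmooth : ContDiff ℝ 1 (mollify φ h) := (contDiff_mollify hh).of_le (by norm_num)
    refine is_const_of_fderiv_eq_zero (𝕜 := ℝ) (hsmooth.differentiable one_ne_zero) (fun x ↦ ?_) x 0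
    ext v
    have hcont := continuous_dirDeriv (v := v) hsmooth
    have hae : dirDeriv v (mollify φ h) =ᵐ[volume] 0 := by
      refine ae_eq_zero_of_integral_contDiff_smul_eq_zero hcont.locallyIntegrable
        fun ζ hζ hζc ↦ ?_
      have hζ1 : ContDiff ℝ 1 ζ := hζ.of_le (by norm_num)
      have hζm : IsTestFunction (mollify φ ζ) :=
        ⟨contDiff_mollify hζ.continuous.locallyIntegrable, hasCompactSupport_mollify hζc⟩
      have hparts := integral_mul_dirDeriv (v := v) hsmooth hζ1 hζc
      simp_rw [mul_comm (mollify φ h _)] at hparts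
      rw [integral_mul_mollify (continuous_dirDeriv hζ1) (hasCompactSupport_dirDeriv hζc) hh,
        ← dirDeriv_mollify hζ1 hζc] at hparts
      simpa [mul_comm, h0 v _ hζm] using hparts
    exact congrFun (Measure.eq_of_ae_eq hae hcont continuous_zero) x
  obtain ⟨c, hc⟩ : ∃ c, Tendsto (fun φ ↦ mollify φ h 0) smallBumps (𝓝 c) := by
    let ψ : ContDiffBump (0 : E) := ⟨1, 2, one_pos, one_lt_two⟩
    have hψ := tendsto_integral_mul_mollify (ψ.continuous_normed (μ := volume))
      ψ.hasCompactSupport_normed hh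
    exact ⟨_, by simpa [hconst, integral_mul_const, ψ.integral_normed] using hψ⟩
  refine ⟨c, ?_⟩
  have hae := ae_eq_zero_of_integral_contDiff_smul_eq_zero
    (hh.sub (locallyIntegrable_const c)) fun ζ hζ hζc ↦ ?_
  · filter_upwards [hae] with x hx using sub_eq_zero.mp hx
  · have hlim := tendsto_integral_mul_mollify hζ.continuous hζc hh
    simp_rw [hconst, integral_mul_const] at hlim
    have hζh : ∫ x, ζ x * h x = (∫ x, ζ x) * c := tendsto_nhds_unique hlim (hc.const_mul _)
    simp only [Pi.sub_apply, smul_eq_mul, mul_sub]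
    rw [integral_sub (by exact hh.integrable_smul_left_of_hasCompactSupport hζ.continuous hζc)
      ((hζ.continuous.integrable_of_hasCompactSupport hζc).mul_const c), integral_mul_const]
    exact sub_eq_zero.mpr hζh

end WeaklyConstant

section Cutoff

variable (E : Type*) [NormedAddCommGroup E] [InnerProductSpace ℝ E] [FiniteDimensional ℝ E]

theorem exists_isTestFunction_cutoff : ∃ C : ℝ, ∀ R : ℝ, 0 < R → ∃ χ : E → ℝ,
    IsTestFunction χ ∧ (∀ x, |χ x| ≤ 1) ∧ (∀ x, ‖x‖ ≤ R → χ x = 1) ∧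
      ∀ x, ‖∇ χ x‖ ≤ C / R := by
  let ψ : ContDiffBump (0 : E) := ⟨1, 2, one_pos, one_lt_two⟩
  have hψ : ContDiff ℝ ∞ ψ := ψ.contDiff
  obtain ⟨C, hC⟩ := hψ.lipschitzWith_of_hasCompactSupport ψ.hasCompactSupport (by simp)
  refine ⟨C, fun R hR ↦ ⟨fun x ↦ ψ (R⁻¹ • x), ⟨hψ.comp (contDiff_const_smul _), ?_⟩, fun x ↦ ?_,
    fun x hx ↦ ψ.one_of_mem_closedBall ?_, fun x ↦ ?_⟩⟩
  · exact ψ.hasCompactSupport.comp_homeomorph (Homeomorph.smulOfNeZero R⁻¹ (inv_ne_zero hR.ne'))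
  · exact (abs_of_nonneg ψ.nonneg).trans_le ψ.le_one
  · simpa [ψ, norm_smul, abs_of_pos hR, inv_mul_le_iff₀ hR] using hx
  · rw [norm_gradient_eq_norm_fderiv, fderiv_comp_smul, norm_smul, norm_inv, Real.norm_eq_abs,
      abs_of_pos hR, inv_mul_eq_div]
    gcongr
    exact norm_fderiv_le_of_lipschitz ℝ hC

end Cutoff

section Caccioppoli

variable {E : Type*} [NormedAddCommGroup E] [InnerProductSpace ℝ E]

theorem half_mul_sq_norm_le_inner_add {w : ℝ} (hw : 0 < w) (c H : ℝ) (a b r : E) :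
    w * (c ^ 2 * ‖a‖ ^ 2) / 2 ≤ ⟪w • a + r, c ^ 2 • a + (2 * c * H) • b⟫ +
      (5 * (w * H ^ 2) * ‖b‖ ^ 2 + 2 * c ^ 2 * (‖r‖ ^ 2 / w)) := by
  have hsq : ⟪w • a + r, c ^ 2 • a + (2 * c * H) • b⟫ +
      (5 * (w * H ^ 2) * ‖b‖ ^ 2 + 2 * c ^ 2 * (‖r‖ ^ 2 / w)) - w * (c ^ 2 * ‖a‖ ^ 2) / 2 =
      w / 4 * ‖c • a + (4 * H) • b‖ ^ 2 + w / 4 * ‖c • a + (2 * c / w) • r‖ ^ 2 +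
        w * ‖H • b + (c / w) • r‖ ^ 2 := by
    simp only [← real_inner_self_eq_norm_sq, inner_add_left, inner_add_right,
      real_inner_smul_left, real_inner_smul_right, real_inner_comm a b, real_inner_comm a r,
      real_inner_comm b r]
    field_simp
    ring
  rw [← sub_nonneg, hsq]
  positivity

variable [FiniteDimensional ℝ E] [MeasurableSpace E] [BorelSpace E] {H c w : E → ℝ} {r : E → E}

theorem integral_mul_sq_norm_gradient_le (hw : Continuous w) (hw0 : ∀ x, 0 < w x)
    (hH : ContDiff ℝ 1 H) (hc : ContDiff ℝ 1 c) (hcc : HasCompactSupport c) (hr : Continuous r)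
    (h0 : ∫ x, ⟪w x • ∇ H x + r x, ∇ (fun y ↦ c y ^ 2 * H y) x⟫ = 0) :
    ∫ x, w x * (c x ^ 2 * ‖∇ H x‖ ^ 2) ≤
      ∫ x, (10 * (w x * H x ^ 2) * ‖∇ c x‖ ^ 2 + 4 * c x ^ 2 * (‖r x‖ ^ 2 / w x)) := by
  simp_rw [fun x ↦ gradient_sq_mul (hc.differentiable one_ne_zero x)
    (hH.differentiable one_ne_zero x)] at h0
  have hH1 := continuous_gradient hH
  have hc1 := continuous_gradient hc
  have hc0 := hc.continuous
  have hH0 := hH.continuous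
  have hzero {x : E} (hx : x ∉ tsupport c) : c x = 0 ∧ ∇ c x = 0 :=
    ⟨image_eq_zero_of_notMem_tsupport hx, gradient_eq_zero_of_notMem_tsupport hx⟩
  have hint {F : E → ℝ} (hF : Continuous F) (hF0 : ∀ x, c x = 0 ∧ ∇ c x = 0 → F x = 0) :
      Integrable F :=
    hF.integrable_of_hasCompactSupport
      (HasCompactSupport.intro hcc.isCompact fun x hx ↦ hF0 x (hzero hx))
  have hflux : Integrable fun x ↦
      ⟪w x • ∇ H x + r x, c x ^ 2 • ∇ H x + (2 * c x * H x) • ∇ c x⟫ :=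
    hint (by fun_prop) fun x hx ↦ by simp [hx]
  have herr : Integrable fun x ↦
      5 * (w x * H x ^ 2) * ‖∇ c x‖ ^ 2 + 2 * c x ^ 2 * (‖r x‖ ^ 2 / w x) :=
    hint (by fun_prop (disch := exact fun x ↦ (hw0 x).ne')) fun x hx ↦ by simp [hx]
  have henergy : Integrable fun x ↦ w x * (c x ^ 2 * ‖∇ H x‖ ^ 2) / 2 :=
    hint (by fun_prop) fun x hx ↦ by simp [hx]
  have hmono := integral_mono henergy (hflux.add herr) fun x ↦
    half_mul_sq_norm_le_inner_add (hw0 x) (c x) (H x) (∇ H x) (∇ c x) (r x)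
  have hdouble (x : E) : 10 * (w x * H x ^ 2) * ‖∇ c x‖ ^ 2 + 4 * c x ^ 2 * (‖r x‖ ^ 2 / w x) =
      2 * (5 * (w x * H x ^ 2) * ‖∇ c x‖ ^ 2 + 2 * c x ^ 2 * (‖r x‖ ^ 2 / w x)) := by
    ring
  simp only [Pi.add_apply] at hmono
  rw [integral_add hflux herr, h0, zero_add, integral_div] at hmono
  simp_rw [hdouble, integral_const_mul]
  linarith

end Caccioppoli

section WeakEquation

variable {E : Type*} [NormedAddCommGroup E] [InnerProductSpace ℝ E] [FiniteDimensional ℝ E]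
  [MeasurableSpace E] [BorelSpace E] {φ : ContDiffBump (0 : E)} {V p ζ : E → ℝ}

theorem integral_inner_gradient_mollify_add (hV : ContDiff ℝ 1 V) (hp : LocallyIntegrable p)
    (hζ : ContDiff ℝ 2 ζ) (hζc : HasCompactSupport ζ) :
    ∫ x, ⟪∇ (mollify φ p) x + mollify φ (fun y ↦ p y • ∇ V y) x, ∇ ζ x⟫ =
      -∫ x, p x * generator V (mollify φ ζ) x := by
  have hζ1 : ContDiff ℝ 1 ζ := hζ.of_le (by norm_num)
  have hdζ := continuous_gradient hζ1
  have hdζc := hasCompactSupport_gradient hζc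
  have hpV : LocallyIntegrable fun y ↦ p y • ∇ V y := hp.smul_continuous (continuous_gradient hV)
  have hP : ContDiff ℝ 1 (mollify φ p) := (contDiff_mollify hp).of_le (by norm_num)
  have hW : Continuous (mollify φ fun y ↦ p y • ∇ V y) := (contDiff_mollify hpV).continuous
  have hζm : ContDiff ℝ 1 (mollify φ ζ) :=
    (contDiff_mollify hζ.continuous.locallyIntegrable).of_le (by norm_num)
  have hζmc : HasCompactSupport (mollify φ ζ) := hasCompactSupport_mollify hζc
  have hgrad : ∫ x, ⟪∇ (mollify φ p) x, ∇ ζ x⟫ = -∫ x, p x * Δ (mollify φ ζ) x := by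
    rw [← neg_eq_iff_eq_neg, ← integral_mul_laplacian hP hζ hζc, laplacian_mollify hζ hζc]
    simp_rw [mul_comm (mollify φ p _), mul_comm (p _)]
    exact integral_mul_mollify (continuous_laplacian hζ) (hasCompactSupport_laplacian hζc) hp
  have hdrift : ∫ x, ⟪mollify φ (fun y ↦ p y • ∇ V y) x, ∇ ζ x⟫ =
      ∫ x, p x * ⟪∇ V x, ∇ (mollify φ ζ) x⟫ := by
    simp_rw [real_inner_comm (∇ ζ _)]
    rw [integral_inner_mollify hdζ hdζc hpV, gradient_mollify hζ1 hζc]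
    simp_rw [real_inner_smul_right, real_inner_comm (∇ V _)]
  have hint {F : E → ℝ} (hF : Continuous F) (hFc : HasCompactSupport F) :
      Integrable fun x ↦ p x * F x :=
    hp.integrable_smul_right_of_hasCompactSupport hF hFc
  have hcross {G : E → E} (hG : Continuous G) : Integrable fun x ↦ ⟪G x, ∇ ζ x⟫ :=
    (hG.inner hdζ).integrable_of_hasCompactSupport (hdζc.mono fun x hx h0 ↦ hx (by simp [h0]))
  simp_rw [inner_add_left, generator, mul_sub]
  rw [integral_add (hcross (continuous_gradient hP)) (hcross hW), hgrad, hdrift,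
    integral_sub]
  · ring
  · exact hint (continuous_laplacian (contDiff_mollify hζ.continuous.locallyIntegrable |>.of_le
      (by norm_cast))) (hasCompactSupport_laplacian hζmc)
  · exact hint ((continuous_gradient hV).inner (continuous_gradient hζm))
      ((hasCompactSupport_gradient hζmc).mono fun x hx h0 ↦ hx (by simp [h0]))

end WeakEquation

section L2

variable {X : Type*} {mX : MeasurableSpace X} {μ : Measure X} {a b : X → ℝ}

theorem inner_memLp_toLp (ha : MemLp a 2 μ) (hb : MemLp b 2 μ) :
    ⟪ha.toLp, hb.toLp⟫ = ∫ x, a x * b x ∂μ := by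
  rw [L2.inner_def]
  refine integral_congr_ae ?_
  filter_upwards [ha.coeFn_toLp, hb.coeFn_toLp] with x hax hbx
  simp [hax, hbx, mul_comm]

theorem sq_integral_mul_le (ha : MemLp a 2 μ) (hb : MemLp b 2 μ) :
    (∫ x, a x * b x ∂μ) ^ 2 ≤ (∫ x, a x ^ 2 ∂μ) * ∫ x, b x ^ 2 ∂μ := by
  simpa only [inner_memLp_toLp, sq] using real_inner_mul_inner_self_le ha.toLp hb.toLp

end L2

section Liouville

variable {E : Type*} [NormedAddCommGroup E] [InnerProductSpace ℝ E] [FiniteDimensional ℝ E]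
  [MeasurableSpace E] [BorelSpace E] {φ : ContDiffBump (0 : E)} {V h : E → ℝ}

/-- The regularization `e^V (h e^{-V})_φ` of `h`. Mollifying the density `h e^{-V}` instead of `h`
keeps the weak equation `∫ h (L ζ) e^{-V} = 0` in divergence form, up to a small commutator. -/
noncomputable def gibbsMollify (V : E → ℝ) (φ : ContDiffBump (0 : E)) (h : E → ℝ) (x : E) : ℝ :=
  exp (V x) * mollify φ (fun y ↦ h y * exp (-V y)) x

/-- The error `(h e^{-V} ∇V)_φ - (h e^{-V})_φ ∇V` committed by the regularization. -/
noncomputable def mollifyCommutator (V : E → ℝ) (φ : ContDiffBump (0 : E)) (h : E → ℝ) (x : E) :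
    E :=
  mollify φ (fun y ↦ (h y * exp (-V y)) • ∇ V y) x -
    mollify φ (fun y ↦ h y * exp (-V y)) x • ∇ V x

theorem locallyIntegrable_mul_exp_neg (hV : Continuous V) (hh : LocallyIntegrable h) :
    LocallyIntegrable fun y ↦ h y * exp (-V y) :=
  hh.mul_continuous (continuous_exp.comp hV.neg)

theorem contDiff_gibbsMollify {k : ℕ} (hV : ContDiff ℝ k V) (hh : LocallyIntegrable h) :
    ContDiff ℝ k (gibbsMollify V φ h) :=
  hV.exp.mul ((contDiff_mollify (locallyIntegrable_mul_exp_neg hV.continuous hh)).of_le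
    (by exact_mod_cast le_top))

theorem continuous_mollifyCommutator (hV : ContDiff ℝ 1 V) (hh : LocallyIntegrable h) :
    Continuous (mollifyCommutator V φ h) := by
  have hp := locallyIntegrable_mul_exp_neg hV.continuous hh
  have hdV := continuous_gradient hV
  exact (contDiff_mollify (hp.smul_continuous hdV)).continuous.sub
    ((contDiff_mollify hp).continuous.smul hdV)

theorem exp_neg_smul_gradient_gibbsMollify_add (hV : ContDiff ℝ 1 V) (hh : LocallyIntegrable h)
    (x : E) :
    exp (-V x) • ∇ (gibbsMollify V φ h) x + mollifyCommutator V φ h x =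
      ∇ (mollify φ fun y ↦ h y * exp (-V y)) x +
        mollify φ (fun y ↦ (h y * exp (-V y)) • ∇ V y) x := by
  have hV' : DifferentiableAt ℝ V x := hV.differentiable one_ne_zero x
  have hp := contDiff_mollify (φ := φ) (locallyIntegrable_mul_exp_neg hV.continuous hh)
  have hgrad : ∇ (gibbsMollify V φ h) x = exp (V x) • ∇ (mollify φ fun y ↦ h y * exp (-V y)) x +
      mollify φ (fun y ↦ h y * exp (-V y)) x • exp (V x) • ∇ V x := by
    rw [← gradient_exp hV']
    exact gradient_mul hV'.exp (hp.differentiable (by simp) x)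
  rw [hgrad, mollifyCommutator, smul_add, smul_smul, ← exp_add, neg_add_cancel, exp_zero, one_smul,
    smul_comm (exp (-V x)), smul_smul (exp (-V x)), ← exp_add, neg_add_cancel, exp_zero, one_smul]
  abel

theorem integral_inner_gibbsMollify_flux_eq_zero (hV : ContDiff ℝ 1 V) (hh : LocallyIntegrable h)
    (h0 : ∀ ζ : E → ℝ, IsTestFunction ζ → ∫ x, h x * exp (-V x) * generator V ζ x = 0)
    {ζ : E → ℝ} (hζ : ContDiff ℝ 2 ζ) (hζc : HasCompactSupport ζ) :
    ∫ x, ⟪exp (-V x) • ∇ (gibbsMollify V φ h) x + mollifyCommutator V φ h x, ∇ ζ x⟫ = 0 := by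
  simp_rw [exp_neg_smul_gradient_gibbsMollify_add hV hh]
  rw [integral_inner_gradient_mollify_add hV (locallyIntegrable_mul_exp_neg hV.continuous hh) hζ
    hζc, h0 _ ⟨contDiff_mollify hζ.continuous.locallyIntegrable, hasCompactSupport_mollify hζc⟩,
    neg_zero]

theorem locallyIntegrable_sq_mul_exp_neg (hV : Continuous V)
    (hq : LocallyIntegrable fun x ↦ h x ^ 2 * exp (-V x)) :
    LocallyIntegrable fun y ↦ (h y * exp (-V y)) ^ 2 := by
  simpa only [mul_pow, sq (exp _), mul_assoc] using locallyIntegrable_mul_exp_neg hV hq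

theorem mollify_sq_mul_exp_neg_le (hV : Continuous V)
    (hq : LocallyIntegrable fun x ↦ h x ^ 2 * exp (-V x)) {x : E}
    (hclose : ∀ y ∈ Metric.ball x φ.rOut, dist (V y) (V x) < log 2) :
    mollify φ (fun y ↦ (h y * exp (-V y)) ^ 2) x ≤
      2 * exp (-V x) * mollify φ (fun y ↦ h y ^ 2 * exp (-V y)) x := by
  refine mollify_le_mul_mollify (locallyIntegrable_sq_mul_exp_neg hV hq) hq fun y hy ↦ ?_
  have hexp : exp (-V y) ≤ 2 * exp (-V x) := by
    rw [← exp_log two_pos, ← exp_add, exp_le_exp]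
    linarith [neg_abs_le (V y - V x), hclose y hy, dist_eq (V y) (V x)]
  calc (h y * exp (-V y)) ^ 2 = h y ^ 2 * exp (-V y) * exp (-V y) := by ring
    _ ≤ h y ^ 2 * exp (-V y) * (2 * exp (-V x)) := by gcongr
    _ = 2 * exp (-V x) * (h y ^ 2 * exp (-V y)) := by ring

theorem eventually_gibbsMollify_bounds (hV : ContDiff ℝ 1 V) (hh : LocallyIntegrable h)
    (hq : LocallyIntegrable fun x ↦ h x ^ 2 * exp (-V x)) {K : Set E} (hK : IsCompact K) {η : ℝ}
    (hη : 0 < η) :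
    ∀ᶠ φ in smallBumps (E := E), ∀ x ∈ K,
      exp (-V x) * gibbsMollify V φ h x ^ 2 ≤
        2 * mollify φ (fun y ↦ h y ^ 2 * exp (-V y)) x ∧
      ‖mollifyCommutator V φ h x‖ ^ 2 / exp (-V x) ≤
        2 * η ^ 2 * mollify φ (fun y ↦ h y ^ 2 * exp (-V y)) x := by
  have hp := locallyIntegrable_mul_exp_neg hV.continuous hh
  have hp_abs : LocallyIntegrable fun y ↦ |h y * exp (-V y)| := fun y ↦ (hp y).norm
  have hp_sq := locallyIntegrable_sq_mul_exp_neg hV.continuous hq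
  filter_upwards [eventually_forall_dist_lt_of_continuous hV.continuous hK (log_pos one_lt_two),
    eventually_forall_dist_lt_of_continuous (continuous_gradient hV) hK hη]
    with φ hVclose hdVclose x hx
  have hq_sq := mollify_sq_mul_exp_neg_le hV.continuous hq (hVclose x hx)
  constructor
  · calc exp (-V x) * gibbsMollify V φ h x ^ 2
        = exp (V x) * mollify φ (fun y ↦ h y * exp (-V y)) x ^ 2 := by
          rw [gibbsMollify, exp_neg]
          field_simp
      _ ≤ exp (V x) * (2 * exp (-V x) * mollify φ (fun y ↦ h y ^ 2 * exp (-V y)) x) := by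
          gcongr
          exact (sq_mollify_le hp hp_sq).trans hq_sq
      _ = 2 * mollify φ (fun y ↦ h y ^ 2 * exp (-V y)) x := by
          rw [exp_neg]
          field_simp
  · rw [div_le_iff₀ (exp_pos _)]
    calc ‖mollifyCommutator V φ h x‖ ^ 2
        ≤ (η * mollify φ (fun y ↦ |h y * exp (-V y)|) x) ^ 2 := by
          gcongr
          exact norm_mollify_smul_sub_le hp (continuous_gradient hV)
            fun y hy ↦ (hdVclose x hx y hy).le
      _ ≤ η ^ 2 * mollify φ (fun y ↦ (h y * exp (-V y)) ^ 2) x := by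
          rw [mul_pow]
          gcongr
          simpa only [sq_abs] using sq_mollify_le (φ := φ) (x := x) hp_abs
            (by simpa only [sq_abs] using hp_sq)
      _ ≤ η ^ 2 * (2 * exp (-V x) * mollify φ (fun y ↦ h y ^ 2 * exp (-V y)) x) := by gcongr
      _ = _ := by ring

end Liouville

section LocalEnergy

variable {E : Type*} [NormedAddCommGroup E] [InnerProductSpace ℝ E] [FiniteDimensional ℝ E]
  [MeasurableSpace E] [BorelSpace E] {V h : E → ℝ}

theorem eventually_integral_gradient_gibbsMollify_le (hV : ContDiff ℝ 2 V)
    (hh : LocallyIntegrable h) (hq : Integrable fun x ↦ h x ^ 2 * exp (-V x))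
    (h0 : ∀ ζ : E → ℝ, IsTestFunction ζ → ∫ x, h x * exp (-V x) * generator V ζ x = 0)
    {χ : E → ℝ} (hχ : IsTestFunction χ) (hχ1 : ∀ x, |χ x| ≤ 1) {A η : ℝ}
    (hχA : ∀ x, ‖∇ χ x‖ ≤ A) (hη : 0 < η) :
    ∀ᶠ φ in smallBumps (E := E),
      ∫ x, exp (-V x) * (χ x ^ 2 * ‖∇ (gibbsMollify V φ h) x‖ ^ 2) ≤
        (20 * A ^ 2 + 8 * η ^ 2) * ∫ x, h x ^ 2 * exp (-V x) := by
  have hV1 : ContDiff ℝ 1 V := hV.of_le one_le_two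
  have hχ2 := hχ.contDiff_nat 2
  have hχ1' := hχ.contDiff_nat 1
  have hw : Continuous fun x ↦ exp (-V x) := continuous_exp.comp hV.continuous.neg
  filter_upwards [eventually_gibbsMollify_bounds hV1 hh hq.locallyIntegrable
    hχ.hasCompactSupport.isCompact hη] with φ hφ
  set Q := mollify φ fun y ↦ h y ^ 2 * exp (-V y)
  have hH := contDiff_gibbsMollify (φ := φ) (k := 2) hV hh
  have hr := continuous_mollifyCommutator (φ := φ) hV1 hh
  refine (integral_mul_sq_norm_gradient_le hw (fun x ↦ exp_pos _) (hH.of_le one_le_two) hχ1'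
    hχ.hasCompactSupport hr (integral_inner_gibbsMollify_flux_eq_zero hV1 hh h0
      ((hχ2.pow 2).mul hH) ?_)).trans ?_
  · exact (hχ.hasCompactSupport.comp_left (g := fun t : ℝ ↦ t ^ 2) (by simp)).mul_right
  rw [← integral_mollify (φ := φ) hq, ← integral_const_mul]
  refine integral_mono_of_nonneg (.of_forall fun x ↦ by positivity)
    ((integrable_mollify hq).const_mul _) (.of_forall fun x ↦ ?_)
  have hQ : 0 ≤ Q x := mollify_nonneg (fun y ↦ by positivity) x
  by_cases hx : x ∈ tsupport χ
  · obtain ⟨hmass, herr⟩ := hφ x hx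
    have hgrad : ‖∇ χ x‖ ^ 2 ≤ A ^ 2 := by gcongr; exact hχA x
    have hcut : χ x ^ 2 ≤ 1 := (sq_le_one_iff_abs_le_one _).mpr (hχ1 x)
    calc 10 * (exp (-V x) * gibbsMollify V φ h x ^ 2) * ‖∇ χ x‖ ^ 2 +
          4 * χ x ^ 2 * (‖mollifyCommutator V φ h x‖ ^ 2 / exp (-V x))
        ≤ 10 * (2 * Q x) * A ^ 2 + 4 * 1 * (2 * η ^ 2 * Q x) := by gcongr
      _ = (20 * A ^ 2 + 8 * η ^ 2) * Q x := by ring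
  · simp only [image_eq_zero_of_notMem_tsupport hx, gradient_eq_zero_of_notMem_tsupport hx,
      norm_zero, ne_eq, OfNat.ofNat_ne_zero, not_false_eq_true, zero_pow, mul_zero, zero_mul,
      add_zero]
    positivity

theorem sq_integral_mul_dirDeriv_le (hV : Continuous V) {H χ ζ : E → ℝ} (hH : ContDiff ℝ 1 H)
    (hχ : Continuous χ) (hχc : HasCompactSupport χ) (hζ : ContDiff ℝ 1 ζ)
    (hζc : HasCompactSupport ζ) (hχζ : ∀ x, ζ x ≠ 0 → χ x = 1) (v : E) :
    (∫ x, H x * dirDeriv v ζ x) ^ 2 ≤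
      ‖v‖ ^ 2 * (∫ x, exp (-V x) * (χ x ^ 2 * ‖∇ H x‖ ^ 2)) * ∫ x, exp (V x) * ζ x ^ 2 := by
  have hdH := continuous_gradient hH
  have hζ0 := hζ.continuous
  let a (x : E) : ℝ := exp (-V x / 2) * (χ x * dirDeriv v H x)
  let b (x : E) : ℝ := exp (V x / 2) * ζ x
  have hdvH : Continuous (dirDeriv v H) := continuous_dirDeriv hH
  have ha : MemLp a 2 := Continuous.memLp_of_hasCompactSupport (by fun_prop)
    (hχc.mul_right.mul_left)
  have hb : MemLp b 2 := Continuous.memLp_of_hasCompactSupport (by fun_prop) hζc.mul_left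
  have hparts : ∫ x, H x * dirDeriv v ζ x = -∫ x, a x * b x := by
    rw [integral_mul_dirDeriv hH hζ hζc]
    congr 1
    refine integral_congr_ae (.of_forall fun x ↦ ?_)
    by_cases hx : ζ x = 0
    · simp [b, hx]
    · simp only [a, b, hχζ x hx]
      rw [neg_div, exp_neg]
      field_simp
  have ha_sq : ∫ x, a x ^ 2 ≤ ‖v‖ ^ 2 * ∫ x, exp (-V x) * (χ x ^ 2 * ‖∇ H x‖ ^ 2) := by
    rw [← integral_const_mul]
    refine integral_mono ha.integrable_sq (Continuous.integrable_of_hasCompactSupport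
      (by fun_prop) (hχc.comp_left (g := fun t : ℝ ↦ t ^ 2) (by simp)).mul_right.mul_left.mul_left)
      fun x ↦ ?_
    calc a x ^ 2 = exp (-V x) * (χ x ^ 2 * dirDeriv v H x ^ 2) := by
          simp only [a, mul_pow, ← exp_nat_mul]
          ring_nf
      _ ≤ exp (-V x) * (χ x ^ 2 * (‖∇ H x‖ ^ 2 * ‖v‖ ^ 2)) := by
          gcongr
          exact sq_dirDeriv_le H
      _ = _ := by ring
  have hb_sq : ∫ x, b x ^ 2 = ∫ x, exp (V x) * ζ x ^ 2 := by
    simp only [b, mul_pow, ← exp_nat_mul]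
    ring_nf
  rw [hparts, neg_sq, ← hb_sq]
  refine (sq_integral_mul_le ha hb).trans ?_
  gcongr

end LocalEnergy

section LiouvilleTheorem

variable {E : Type*} [NormedAddCommGroup E] [InnerProductSpace ℝ E] [FiniteDimensional ℝ E]
  [MeasurableSpace E] [BorelSpace E] {V h : E → ℝ}

theorem sq_integral_mul_dirDeriv_le_of_weak (hV : ContDiff ℝ 2 V)
    (hh : LocallyIntegrable h) (hq : Integrable fun x ↦ h x ^ 2 * exp (-V x))
    (h0 : ∀ ζ : E → ℝ, IsTestFunction ζ → ∫ x, h x * exp (-V x) * generator V ζ x = 0)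
    {χ ζ : E → ℝ} (hχ : IsTestFunction χ) (hχ1 : ∀ x, |χ x| ≤ 1) {A η : ℝ}
    (hχA : ∀ x, ‖∇ χ x‖ ≤ A) (hη : 0 < η) (hζ : IsTestFunction ζ)
    (hχζ : ∀ x, ζ x ≠ 0 → χ x = 1) (v : E) :
    (∫ x, h x * dirDeriv v ζ x) ^ 2 ≤
      ‖v‖ ^ 2 * ((20 * A ^ 2 + 8 * η ^ 2) * ∫ x, h x ^ 2 * exp (-V x)) *
        ∫ x, exp (V x) * ζ x ^ 2 := by
  have hζ1 := hζ.contDiff_nat 1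
  have hlim := tendsto_integral_mul_mollify (a := fun x ↦ exp (V x) * dirDeriv v ζ x)
    ((continuous_exp.comp hV.continuous).mul (continuous_dirDeriv hζ1))
    (hasCompactSupport_dirDeriv hζ.hasCompactSupport).mul_left
    (locallyIntegrable_mul_exp_neg hV.continuous hh)
  have hlim_eq : ∫ x, exp (V x) * dirDeriv v ζ x * (h x * exp (-V x)) =
      ∫ x, h x * dirDeriv v ζ x := integral_congr_ae (.of_forall fun x ↦ by
    simp only [exp_neg]
    field_simp)
  rw [hlim_eq] at hlim
  refine le_of_tendsto (hlim.pow 2) ?_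
  filter_upwards [eventually_integral_gradient_gibbsMollify_le hV hh hq h0 hχ hχ1 hχA hη]
    with φ hφ
  have hH := contDiff_gibbsMollify (φ := φ) (k := 1) (hV.of_le (by norm_num)) hh
  have hcomm (x : E) : exp (V x) * dirDeriv v ζ x * mollify φ (fun y ↦ h y * exp (-V y)) x =
      gibbsMollify V φ h x * dirDeriv v ζ x := by
    rw [gibbsMollify]
    ring
  simp_rw [hcomm]
  refine (sq_integral_mul_dirDeriv_le hV.continuous hH hχ.contDiff.continuous
    hχ.hasCompactSupport hζ1 hζ.hasCompactSupport hχζ v).trans ?_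
  gcongr

theorem ae_const_of_integral_mul_generator_eq_zero (hV : ContDiff ℝ 2 V)
    (hh : LocallyIntegrable h) (hq : Integrable fun x ↦ h x ^ 2 * exp (-V x))
    (h0 : ∀ ζ : E → ℝ, IsTestFunction ζ → ∫ x, h x * exp (-V x) * generator V ζ x = 0) :
    ∃ c, ∀ᵐ x, h x = c := by
  obtain ⟨C, hC⟩ := exists_isTestFunction_cutoff E
  refine ae_const_of_integral_mul_dirDeriv_eq_zero hh fun v ζ hζ ↦ ?_
  set B := ‖v‖ ^ 2 * ((20 * C ^ 2 + 8) * ∫ x, h x ^ 2 * exp (-V x)) * ∫ x, exp (V x) * ζ x ^ 2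
  obtain ⟨R₀, hR₀⟩ := hζ.hasCompactSupport.isCompact.isBounded.subset_closedBall 0
  have hbound : ∀ᶠ R in atTop, (∫ x, h x * dirDeriv v ζ x) ^ 2 ≤ B / R ^ 2 := by
    filter_upwards [eventually_gt_atTop 0, eventually_ge_atTop R₀] with R hR hR₀R
    obtain ⟨χ, hχ, hχ1, hχR, hχC⟩ := hC R hR
    refine (sq_integral_mul_dirDeriv_le_of_weak hV hh hq h0 hχ hχ1 hχC (one_div_pos.mpr hR) hζ
      (fun x hx ↦ hχR x ?_) v).trans_eq ?_
    · simpa using (hR₀ (subset_tsupport ζ hx)).trans hR₀R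
    · simp only [B]
      field_simp
  have hzero : (∫ x, h x * dirDeriv v ζ x) ^ 2 ≤ 0 :=
    ge_of_tendsto (tendsto_const_nhds.div_atTop (tendsto_pow_atTop two_ne_zero)) hbound
  exact pow_eq_zero_iff two_ne_zero |>.mp (le_antisymm hzero (sq_nonneg _))

end LiouvilleTheorem

section SpectralGap

variable {E : Type*} [NormedAddCommGroup E] [InnerProductSpace ℝ E] [CompleteSpace E]
  [MeasurableSpace E] {μ : Measure E} {Λ : ℝ}

/-- The Poincaré inequality with constant `1 / Λ` for `μ`, stated multiplicatively so that it makes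
sense for every real `Λ`, and for all `C¹` functions of finite energy in `L²(μ)`. -/
def HasSpectralGap (μ : Measure E) (Λ : ℝ) : Prop :=
  ∀ f : E → ℝ, ContDiff ℝ 1 f → MemLp f 2 μ → MemLp (∇ f) 2 μ →
    Λ * Var[f; μ] ≤ ∫ x, ‖∇ f x‖ ^ 2 ∂μ

theorem HasSpectralGap.mono {Λ' : ℝ} (hgap : HasSpectralGap μ Λ) (hΛ : Λ' ≤ Λ) :
    HasSpectralGap μ Λ' := fun f hf hf2 hdf2 ↦
  (mul_le_mul_of_nonneg_right hΛ (variance_nonneg f μ)).trans (hgap f hf hf2 hdf2)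

theorem isClosed_setOf_hasSpectralGap : IsClosed {Λ | HasSpectralGap μ Λ} := by
  simp only [HasSpectralGap, Set.ofPred_forall]
  exact isClosed_iInter fun f ↦ isClosed_iInter fun _ ↦ isClosed_iInter fun _ ↦
    isClosed_iInter fun _ ↦ isClosed_le (by fun_prop) continuous_const

end SpectralGap

section GeneratorLinear

variable {E : Type*} [NormedAddCommGroup E] [InnerProductSpace ℝ E] [FiniteDimensional ℝ E]
  {V u v : E → ℝ}

theorem generator_add (hu : ContDiff ℝ 2 u) (hv : ContDiff ℝ 2 v) (x : E) :
    generator V (fun y ↦ u y + v y) x = generator V u x + generator V v x := by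
  have hlap : Δ (fun y ↦ u y + v y) x = Δ u x + Δ v x :=
    hu.contDiffAt.laplacian_add hv.contDiffAt
  rw [generator, hlap, gradient_add (hu.differentiable two_ne_zero x)
    (hv.differentiable two_ne_zero x), inner_add_right, generator, generator]
  ring

theorem generator_const_mul (c : ℝ) (hu : ContDiff ℝ 2 u) (x : E) :
    generator V (fun y ↦ c * u y) x = c * generator V u x := by
  have hlap : Δ (fun y ↦ c * u y) x = c * Δ u x := laplacian_smul c hu.contDiffAt
  have hgrad : ∇ (fun y ↦ c * u y) x = c • ∇ u x := by
    simpa using gradient_mul (differentiableAt_const c) (hu.differentiable two_ne_zero x)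
  rw [generator, hlap, hgrad, real_inner_smul_right, generator]
  ring

end GeneratorLinear

section Duality

variable {E : Type*} [NormedAddCommGroup E] [InnerProductSpace ℝ E] [FiniteDimensional ℝ E]
  [MeasurableSpace E] [BorelSpace E] {V u : E → ℝ}

theorem integral_generator_eq_zero (hV : ContDiff ℝ 1 V) (hu : ContDiff ℝ 2 u)
    (huc : HasCompactSupport u) : ∫ x, generator V u x ∂gibbsMeasure V = 0 := by
  simpa using integral_mul_generator (f := fun _ ↦ 1) hV contDiff_const hu huc

theorem memLp_generator (hV : ContDiff ℝ 1 V) (hu : IsTestFunction u) :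
    MemLp (generator V u) 2 (gibbsMeasure V) :=
  (continuous_generator hV (hu.contDiff_nat 2)).memLp_of_hasCompactSupport
    (hasCompactSupport_generator hu.hasCompactSupport)

/-- The image in `L²` of the test functions under the generator, whose closure consists of the
centred functions when `V` is `C²`. -/
noncomputable def generatorRange (V : E → ℝ) : Submodule ℝ (Lp ℝ 2 (gibbsMeasure V)) where
  carrier := {z | ∃ u, IsTestFunction u ∧ z =ᵐ[gibbsMeasure V] generator V u}
  zero_mem' := by
    refine ⟨fun _ ↦ 0, ⟨contDiff_const, HasCompactSupport.zero⟩, ?_⟩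
    filter_upwards [Lp.coeFn_zero ℝ 2 (gibbsMeasure V)] with x hx
    have h := generator_const_mul (V := V) 0 (contDiff_const (c := (0 : ℝ))) x
    simp only [zero_mul] at h
    rw [hx, Pi.zero_apply, h]
  add_mem' := by
    rintro y z ⟨u, hu, hy⟩ ⟨v, hv, hz⟩
    refine ⟨fun x ↦ u x + v x, ⟨hu.contDiff.add hv.contDiff,
      hu.hasCompactSupport.add hv.hasCompactSupport⟩, ?_⟩
    filter_upwards [Lp.coeFn_add y z, hy, hz] with x hyz hyx hzx
    rw [hyz, Pi.add_apply, hyx, hzx, generator_add (hu.contDiff_nat 2) (hv.contDiff_nat 2)]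
  smul_mem' := by
    rintro c z ⟨u, hu, hz⟩
    refine ⟨fun x ↦ c * u x, ⟨contDiff_const.mul hu.contDiff, hu.hasCompactSupport.mul_left⟩, ?_⟩
    filter_upwards [Lp.coeFn_smul c z, hz] with x hcz hzx
    rw [hcz, Pi.smul_apply, hzx, generator_const_mul c (hu.contDiff_nat 2), smul_eq_mul]

theorem integrable_gibbsMeasure_iff (hint : Integrable fun x ↦ exp (-V x)) {f : E → ℝ} :
    Integrable f (gibbsMeasure V) ↔ Integrable fun x ↦ f x * exp (-V x) := by
  simpa [mul_comm, gibbsMeasure] using integrable_tilted_iff hint f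

theorem locallyIntegrable_of_integrable_sq_mul_exp_neg (hV : Continuous V) {h : E → ℝ}
    (hm : AEStronglyMeasurable h) (hq : Integrable fun x ↦ h x ^ 2 * exp (-V x)) :
    LocallyIntegrable h := by
  have hexp : Continuous fun x ↦ exp (-V x / 2) := by fun_prop
  have hroot : MemLp (fun x ↦ h x * exp (-V x / 2)) 2 := by
    refine (memLp_two_iff_integrable_sq (hm.mul hexp.aestronglyMeasurable)).mpr ?_
    refine hq.congr (.of_forall fun x ↦ ?_)
    simp only [Pi.mul_apply, mul_pow, ← exp_nat_mul]
    ring_nf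
  have hmul := (hroot.locallyIntegrable one_le_two).mul_continuous
    (g := fun x ↦ exp (V x / 2)) (by fun_prop)
  simpa [mul_assoc, ← exp_add, neg_div] using hmul

theorem exists_ae_eq_const_of_mem_orthogonal_generatorRange (hV : ContDiff ℝ 2 V)
    (hint : Integrable fun x ↦ exp (-V x)) {h : Lp ℝ 2 (gibbsMeasure V)}
    (hh : h ∈ (generatorRange V)ᗮ) : ∃ c, ∀ᵐ x ∂gibbsMeasure V, h x = c := by
  have hq : Integrable fun x ↦ h x ^ 2 * exp (-V x) :=
    (integrable_gibbsMeasure_iff hint).mp (Lp.memLp h).integrable_sq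
  have hm : AEStronglyMeasurable h :=
    (Lp.aestronglyMeasurable h).mono_ac (absolutelyContinuous_tilted hint)
  obtain ⟨c, hc⟩ := ae_const_of_integral_mul_generator_eq_zero hV
    (locallyIntegrable_of_integrable_sq_mul_exp_neg hV.continuous hm hq) hq fun ζ hζ ↦ by
      have hζm := memLp_generator (hV.of_le one_le_two) hζ
      have horth := Submodule.inner_left_of_mem_orthogonal (u := hζm.toLp)
        (show hζm.toLp ∈ generatorRange V from ⟨ζ, hζ, hζm.coeFn_toLp⟩) hh
      rw [← Lp.toLp_coeFn h (Lp.memLp h), inner_memLp_toLp, integral_gibbsMeasure] at horth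
      have hZ : (∫ x, exp (-V x))⁻¹ ≠ 0 := (inv_pos.mpr (integral_exp_pos hint)).ne'
      simpa only [mul_right_comm] using (mul_eq_zero.mp horth).resolve_left hZ
  exact ⟨c, (tilted_absolutelyContinuous _ _).ae_le hc⟩

theorem toLp_mem_closure_generatorRange (hV : ContDiff ℝ 2 V)
    (hint : Integrable fun x ↦ exp (-V x)) {g : E → ℝ} (hg : MemLp g 2 (gibbsMeasure V))
    (hg0 : ∫ x, g x ∂gibbsMeasure V = 0) : hg.toLp ∈ (generatorRange V).topologicalClosure := by
  rw [← Submodule.orthogonal_orthogonal_eq_closure, Submodule.mem_orthogonal]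
  intro h hh
  obtain ⟨c, hc⟩ := exists_ae_eq_const_of_mem_orthogonal_generatorRange hV hint hh
  rw [← Lp.toLp_coeFn h (Lp.memLp h), inner_memLp_toLp]
  calc ∫ x, h x * g x ∂gibbsMeasure V = ∫ x, c * g x ∂gibbsMeasure V := by
        refine integral_congr_ae ?_
        filter_upwards [hc] with x hx
        rw [hx]
    _ = 0 := by rw [integral_const_mul, hg0, mul_zero]

theorem sq_integral_mul_generator_le {Λ : ℝ} (hV : ContDiff ℝ 1 V) (hΛ : 0 < Λ)
    (hu : IsTestFunction u)
    (henergy : Λ * ∫ x, ‖∇ u x‖ ^ 2 ∂gibbsMeasure V ≤ ∫ x, generator V u x ^ 2 ∂gibbsMeasure V)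
    {f : E → ℝ} (hf : ContDiff ℝ 1 f) (hdf : MemLp (∇ f) 2 (gibbsMeasure V)) :
    (∫ x, f x * generator V u x ∂gibbsMeasure V) ^ 2 ≤
      (∫ x, ‖∇ f x‖ ^ 2 ∂gibbsMeasure V) / Λ * ∫ x, generator V u x ^ 2 ∂gibbsMeasure V := by
  have hdu : MemLp (∇ u) 2 (gibbsMeasure V) := hu.memLp_gradient
  rw [integral_mul_generator hV hf (hu.contDiff_nat 2) hu.hasCompactSupport, ← sq_abs, abs_neg]
  calc |∫ x, ⟪∇ f x, ∇ u x⟫ ∂gibbsMeasure V| ^ 2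
      ≤ (∫ x, ‖∇ f x‖ * ‖∇ u x‖ ∂gibbsMeasure V) ^ 2 := by
        gcongr
        exact (abs_integral_le_integral_abs).trans (integral_mono_of_nonneg
          (.of_forall fun x ↦ abs_nonneg _) (hdf.norm.integrable_mul hdu.norm)
          (.of_forall fun x ↦ abs_real_inner_le_norm _ _))
    _ ≤ (∫ x, ‖∇ f x‖ ^ 2 ∂gibbsMeasure V) * ∫ x, ‖∇ u x‖ ^ 2 ∂gibbsMeasure V :=
        sq_integral_mul_le hdf.norm hdu.norm
    _ ≤ (∫ x, ‖∇ f x‖ ^ 2 ∂gibbsMeasure V) *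
          ((∫ x, generator V u x ^ 2 ∂gibbsMeasure V) / Λ) := by
        gcongr
        rwa [le_div_iff₀' hΛ]
    _ = _ := by ring

theorem sq_norm_le_of_mem_closure {H : Type*} [NormedAddCommGroup H] [InnerProductSpace ℝ H]
    {K : Set H} {g : H} {C : ℝ} (hC : 0 ≤ C) (hg : g ∈ closure K)
    (hK : ∀ z ∈ K, ⟪g, z⟫ ^ 2 ≤ C * ‖z‖ ^ 2) : ‖g‖ ^ 2 ≤ C := by
  have hclosed : IsClosed {z : H | ⟪g, z⟫ ^ 2 ≤ C * ‖z‖ ^ 2} :=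
    isClosed_le (by fun_prop) (by fun_prop)
  have hself : ⟪g, g⟫ ^ 2 ≤ C * ‖g‖ ^ 2 := closure_minimal hK hclosed hg
  rw [real_inner_self_eq_norm_sq, sq] at hself
  rcases eq_or_ne (‖g‖ ^ 2) 0 with h0 | h0
  · rwa [h0]
  · exact le_of_mul_le_mul_right hself (by positivity)

theorem hasSpectralGap_of_integral_generator_sq_ge {Λ : ℝ} (hV : ContDiff ℝ 2 V)
    (hint : Integrable fun x ↦ exp (-V x)) (hΛ : 0 < Λ)
    (henergy : ∀ u : E → ℝ, IsTestFunction u →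
      Λ * ∫ x, ‖∇ u x‖ ^ 2 ∂gibbsMeasure V ≤ ∫ x, generator V u x ^ 2 ∂gibbsMeasure V) :
    HasSpectralGap (gibbsMeasure V) Λ := by
  intro f hf hf2 hdf
  have : IsProbabilityMeasure (gibbsMeasure V) := isProbabilityMeasure_tilted hint
  have hV1 : ContDiff ℝ 1 V := hV.of_le one_le_two
  set c := ∫ x, f x ∂gibbsMeasure V
  have hg : MemLp (fun x ↦ f x - c) 2 (gibbsMeasure V) := hf2.sub (memLp_const c)
  have hg0 : ∫ x, (f x - c) ∂gibbsMeasure V = 0 := by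
    rw [integral_sub (hf2.integrable one_le_two) (integrable_const c)]
    simp [c]
  have hvar : Var[f; gibbsMeasure V] = ‖hg.toLp‖ ^ 2 := by
    rw [← real_inner_self_eq_norm_sq, inner_memLp_toLp, variance_eq_integral hf2.aemeasurable]
    simp only [sq, c]
  rw [hvar, ← le_div_iff₀' hΛ]
  refine sq_norm_le_of_mem_closure (by positivity)
    (toLp_mem_closure_generatorRange hV hint hg hg0) ?_
  rintro z ⟨u, hu, hz⟩
  have hLu := memLp_generator hV1 hu
  have hz' : z = hLu.toLp := by
    rw [← Lp.toLp_coeFn z (Lp.memLp z), MemLp.toLp_eq_toLp_iff]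
    exact hz
  have hLu0 := integral_generator_eq_zero hV1 (hu.contDiff_nat 2) hu.hasCompactSupport
  have hinner : ∫ x, (f x - c) * generator V u x ∂gibbsMeasure V =
      ∫ x, f x * generator V u x ∂gibbsMeasure V := by
    simp_rw [sub_mul]
    rw [integral_sub (by exact hf2.integrable_mul hLu) ((hLu.integrable one_le_two).const_mul c),
      integral_const_mul, hLu0, mul_zero, sub_zero]
  rw [hz', ← real_inner_self_eq_norm_sq, inner_memLp_toLp, inner_memLp_toLp, hinner]
  simp_rw [← sq]
  exact sq_integral_mul_generator_le hV1 hΛ hu (henergy u hu) hf hdf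

end Duality

section BakryEmery

variable {E : Type*} [NormedAddCommGroup E] [InnerProductSpace ℝ E] [FiniteDimensional ℝ E]
  [MeasurableSpace E] [BorelSpace E] {V q : E → ℝ} {Λ ρ₀ : ℝ}

theorem mul_integral_sq_norm_gradient_le_integral_generator_sq (hV : ContDiff ℝ 2 V)
    (hq : Continuous q) (hHess : ∀ x u, q x * ‖u‖ ^ 2 ≤ iteratedFDeriv ℝ 2 V x ![u, u])
    (h : ∀ g : E → ℝ, IsTestFunction g → Λ * ∫ x, g x ^ 2 ∂gibbsMeasure V ≤
      (∫ x, ‖∇ g x‖ ^ 2 ∂gibbsMeasure V) + ∫ x, q x * g x ^ 2 ∂gibbsMeasure V)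
    {u : E → ℝ} (hu : IsTestFunction u) :
    Λ * ∫ x, ‖∇ u x‖ ^ 2 ∂gibbsMeasure V ≤ ∫ x, generator V u x ^ 2 ∂gibbsMeasure V := by
  let b := stdOrthonormalBasis ℝ E
  have hdu (i) : IsTestFunction (dirDeriv (b i) u) :=
    ⟨contDiff_dirDeriv hu.contDiff le_rfl, hasCompactSupport_dirDeriv hu.hasCompactSupport⟩
  have hdu2 (i) : Continuous fun x ↦ dirDeriv (b i) u x ^ 2 := (hdu i).contDiff.continuous.pow 2
  have hdu2c (i) : HasCompactSupport fun x ↦ dirDeriv (b i) u x ^ 2 := by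
    simp_rw [sq]
    exact (hdu i).hasCompactSupport.mul_left
  have hint (i) : Integrable (fun x ↦ dirDeriv (b i) u x ^ 2) (gibbsMeasure V) :=
    (hdu2 i).integrable_of_hasCompactSupport (hdu2c i)
  have hqint (i) : Integrable (fun x ↦ q x * dirDeriv (b i) u x ^ 2) (gibbsMeasure V) :=
    (hq.mul (hdu2 i)).integrable_of_hasCompactSupport (hdu2c i).mul_left
  have hHess' : ∑ i, ∫ x, q x * dirDeriv (b i) u x ^ 2 ∂gibbsMeasure V ≤
      ∫ x, iteratedFDeriv ℝ 2 V x ![∇ u x, ∇ u x] ∂gibbsMeasure V := by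
    rw [← integral_finsetSum _ fun i _ ↦ hqint i]
    refine integral_mono (integrable_finsetSum _ fun i _ ↦ hqint i)
      (integrable_iteratedFDeriv_two_gradient hV (hu.contDiff_nat 1) hu.hasCompactSupport)
      fun x ↦ ?_
    simp only [← Finset.mul_sum, ← sq_norm_gradient_eq_sum b]
    exact hHess x _
  calc Λ * ∫ x, ‖∇ u x‖ ^ 2 ∂gibbsMeasure V
      = ∑ i, Λ * ∫ x, dirDeriv (b i) u x ^ 2 ∂gibbsMeasure V := by
        simp_rw [sq_norm_gradient_eq_sum b]
        rw [integral_finsetSum _ fun i _ ↦ hint i, Finset.mul_sum]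
    _ ≤ ∑ i, ((∫ x, ‖∇ (dirDeriv (b i) u) x‖ ^ 2 ∂gibbsMeasure V) +
          ∫ x, q x * dirDeriv (b i) u x ^ 2 ∂gibbsMeasure V) :=
        Finset.sum_le_sum fun i _ ↦ h _ (hdu i)
    _ ≤ ∫ x, generator V u x ^ 2 ∂gibbsMeasure V := by
        rw [Finset.sum_add_distrib,
          integral_generator_sq b hV (hu.contDiff_nat 3) hu.hasCompactSupport]
        gcongr

theorem hasSpectralGap_of_le_iteratedFDeriv_two (hV : ContDiff ℝ 2 V)
    (hint : Integrable fun x ↦ exp (-V x)) (hρ₀ : 0 < ρ₀)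
    (hHess : ∀ x u, ρ₀ * ‖u‖ ^ 2 ≤ iteratedFDeriv ℝ 2 V x ![u, u]) :
    HasSpectralGap (gibbsMeasure V) ρ₀ := by
  refine hasSpectralGap_of_integral_generator_sq_ge hV hint hρ₀ fun u hu ↦
    mul_integral_sq_norm_gradient_le_integral_generator_sq hV continuous_const hHess
      (fun g _ ↦ ?_) hu
  rw [integral_const_mul]
  exact le_add_of_nonneg_left (integral_nonneg fun x ↦ by positivity)

end BakryEmery

section StrongConvexity

variable {E : Type*} [NormedAddCommGroup E] [NormedSpace ℝ E] {V : E → ℝ} {ρ₀ : ℝ}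

theorem add_fderiv_add_le_of_le_iteratedFDeriv_two (hV : ContDiff ℝ 2 V)
    (hHess : ∀ x u, ρ₀ * ‖u‖ ^ 2 ≤ iteratedFDeriv ℝ 2 V x ![u, u]) (x w : E) :
    V x + fderiv ℝ V x w + ρ₀ / 2 * ‖w‖ ^ 2 ≤ V (x + w) := by
  have hline (t : ℝ) : HasDerivAt (fun t : ℝ ↦ x + t • w) w t := by
    simpa using ((hasDerivAt_id t).smul_const w).const_add x
  have hV1 (t : ℝ) : HasDerivAt (fun t ↦ V (x + t • w)) (fderiv ℝ V (x + t • w) w) t :=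
    (hV.differentiable two_ne_zero _).hasFDerivAt.comp_hasDerivAt t (hline t)
  have hV2 (t : ℝ) : HasDerivAt (fun t ↦ fderiv ℝ V (x + t • w) w)
      (iteratedFDeriv ℝ 2 V (x + t • w) ![w, w]) t := by
    simpa [iteratedFDeriv_two_apply] using! (((hV.fderiv_right le_rfl).differentiable
      one_ne_zero _).hasFDerivAt.comp_hasDerivAt t (hline t)).clm_apply (hasDerivAt_const t w)
  have hslope : Monotone fun t : ℝ ↦ fderiv ℝ V (x + t • w) w - ρ₀ * ‖w‖ ^ 2 * t := by
    have hderiv (t : ℝ) := (hV2 t).sub ((hasDerivAt_id t).const_mul (ρ₀ * ‖w‖ ^ 2))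
    refine monotone_of_hasDerivAt_nonneg hderiv fun t ↦ ?_
    simpa using hHess (x + t • w) w
  have hmono : MonotoneOn (fun t : ℝ ↦ V (x + t • w) - fderiv ℝ V x w * t
      - ρ₀ / 2 * ‖w‖ ^ 2 * t ^ 2) (Ici 0) := by
    have hderiv (t : ℝ) := ((hV1 t).sub ((hasDerivAt_id t).const_mul (fderiv ℝ V x w))).sub
      ((hasDerivAt_pow 2 t).const_mul (ρ₀ / 2 * ‖w‖ ^ 2))
    refine monotoneOn_of_hasDerivWithinAt_nonneg (convex_Ici 0)
      (fun t _ ↦ (hderiv t).continuousAt.continuousWithinAt)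
      (fun t _ ↦ (hderiv t).hasDerivWithinAt) fun t ht ↦ ?_
    have := hslope (interior_subset ht : (0 : ℝ) ≤ t)
    simp only [zero_smul, add_zero, mul_zero, sub_zero] at this
    norm_num
    linarith
  have h01 := hmono (mem_Ici.mpr le_rfl) (mem_Ici.mpr zero_le_one) zero_le_one
  simp only [zero_smul, one_smul, add_zero] at h01
  linarith

end StrongConvexity

section GaussianMoments

variable {E : Type*} [NormedAddCommGroup E] [InnerProductSpace ℝ E] [FiniteDimensional ℝ E]
  [MeasurableSpace E] [BorelSpace E] {V : E → ℝ} {b ρ₀ : ℝ}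

theorem integrable_exp_neg_mul_sq_norm_add_inner (hb : 0 < b) (w : E) :
    Integrable fun x : E ↦ exp (-b * ‖x‖ ^ 2 + ⟪w, x⟫) := by
  simpa [Complex.norm_exp, ← Complex.ofReal_pow] using
    (GaussianFourier.integrable_cexp_neg_mul_sq_norm_add (b := b) (by simpa using hb) 1 w).norm

theorem integrable_exp_mul_sq_norm_sub (hV : ContDiff ℝ 2 V)
    (hHess : ∀ x u, ρ₀ * ‖u‖ ^ 2 ≤ iteratedFDeriv ℝ 2 V x ![u, u]) (hb : b < ρ₀ / 2) :
    Integrable fun x ↦ exp (b * ‖x‖ ^ 2 - V x) := by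
  have hVc := hV.continuous
  refine ((integrable_exp_neg_mul_sq_norm_add_inner (sub_pos.mpr hb) (-∇ V 0)).const_mul
    (exp (-V 0))).mono' (by fun_prop) (.of_forall fun x ↦ ?_)
  have h := add_fderiv_add_le_of_le_iteratedFDeriv_two hV hHess 0 x
  rw [zero_add] at h
  rw [norm_of_nonneg (exp_pos _).le, ← exp_add, inner_neg_left, inner_gradient_left]
  exact exp_le_exp.mpr (by linarith)

theorem integrable_exp_neg_of_le_iteratedFDeriv_two (hV : ContDiff ℝ 2 V) (hρ₀ : 0 < ρ₀)
    (hHess : ∀ x u, ρ₀ * ‖u‖ ^ 2 ≤ iteratedFDeriv ℝ 2 V x ![u, u]) :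
    Integrable fun x ↦ exp (-V x) := by
  simpa using integrable_exp_mul_sq_norm_sub hV hHess (half_pos hρ₀)

theorem memLp_id_gibbsMeasure (hV : ContDiff ℝ 2 V) (hρ₀ : 0 < ρ₀)
    (hHess : ∀ x u, ρ₀ * ‖u‖ ^ 2 ≤ iteratedFDeriv ℝ 2 V x ![u, u]) :
    MemLp id 2 (gibbsMeasure V) := by
  have hVc := hV.continuous
  rw [memLp_two_iff_integrable_sq_norm aestronglyMeasurable_id,
    integrable_gibbsMeasure_iff (integrable_exp_neg_of_le_iteratedFDeriv_two hV hρ₀ hHess)]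
  refine ((integrable_exp_mul_sq_norm_sub hV hHess
    (b := ρ₀ / 4) (by linarith)).const_mul (4 / ρ₀)).mono' (by fun_prop) (.of_forall fun x ↦ ?_)
  have h := add_one_le_exp (ρ₀ / 4 * ‖x‖ ^ 2)
  rw [norm_of_nonneg (by positivity), sub_eq_add_neg, exp_add, ← mul_assoc]
  gcongr
  rw [div_mul_eq_mul_div, le_div_iff₀ hρ₀, id]
  linarith

end GaussianMoments

section LipschitzVariance

theorem tendsto_variance_of_dominated {Ω ι : Type*} [MeasurableSpace Ω] {μ : Measure Ω}
    [IsProbabilityMeasure μ] {l : Filter ι} [l.IsCountablyGenerated] [l.NeBot] {F : ι → Ω → ℝ}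
    {f B : Ω → ℝ} (hF : ∀ i, AEStronglyMeasurable (F i) μ) (hB : MemLp B 2 μ)
    (hFB : ∀ᶠ i in l, ∀ x, |F i x| ≤ B x) (hlim : ∀ x, Tendsto (F · x) l (𝓝 (f x))) :
    Tendsto (fun i ↦ Var[F i; μ]) l (𝓝 Var[f; μ]) := by
  have hf : MemLp f 2 μ :=
    hB.mono' (aestronglyMeasurable_of_tendsto_ae l hF (.of_forall hlim))
      (.of_forall fun x ↦ le_of_tendsto (hlim x).abs (hFB.mono fun i hi ↦ hi x))
  have hmean : Tendsto (fun i ↦ μ[F i]) l (𝓝 μ[f]) :=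
    tendsto_integral_filter_of_dominated_convergence B (.of_forall hF)
      (hFB.mono fun i hi ↦ .of_forall hi) (hB.integrable one_le_two) (.of_forall hlim)
  have hsq : Tendsto (fun i ↦ μ[F i ^ 2]) l (𝓝 μ[f ^ 2]) := by
    refine tendsto_integral_filter_of_dominated_convergence (fun x ↦ B x ^ 2)
      (.of_forall fun i ↦ (hF i).pow 2) (hFB.mono fun i hi ↦ .of_forall fun x ↦ ?_)
      hB.integrable_sq (.of_forall fun x ↦ (hlim x).pow 2)
    rw [Pi.pow_apply, norm_pow]
    exact pow_le_pow_left₀ (abs_nonneg _) (hi x) 2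
  rw [variance_eq_sub hf]
  refine (hsq.sub (hmean.pow 2)).congr' (hFB.mono fun i hi ↦ ?_)
  exact (variance_eq_sub (hB.mono' (hF i) (.of_forall hi))).symm

variable {E : Type*} [NormedAddCommGroup E] [InnerProductSpace ℝ E] [FiniteDimensional ℝ E]
  [MeasurableSpace E] [BorelSpace E] {μ : Measure E} [IsProbabilityMeasure μ] {q : E → ℝ}
  {K : ℝ≥0} {φ : ContDiffBump (0 : E)}

theorem lipschitzWith_mollify (hq : LipschitzWith K q) : LipschitzWith K (mollify φ q) := by
  have hint := integrable_normed_smul (φ := φ) hq.continuous.locallyIntegrable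
  refine LipschitzWith.of_dist_le_mul fun x y ↦ ?_
  have hK : ∫ t, φ.normed volume t * (K * dist x y) = K * dist x y := by
    rw [integral_mul_const, φ.integral_normed, one_mul]
  rw [dist_eq_norm, mollify_apply, mollify_apply, ← integral_sub (hint x) (hint y), ← hK]
  refine norm_integral_le_of_norm_le (φ.integrable_normed.mul_const _) (.of_forall fun t ↦ ?_)
  rw [← smul_sub, norm_smul, norm_of_nonneg (φ.nonneg_normed t), ← dist_eq_norm]
  gcongr
  · exact φ.nonneg_normed t
  · simpa using hq.dist_le_mul (x - t) (y - t)

theorem abs_mollify_sub_le_of_lipschitzWith (hq : LipschitzWith K q) (x : E) :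
    |mollify φ q x - q x| ≤ K * φ.rOut := by
  refine φ.dist_normed_convolution_le hq.continuous.aestronglyMeasurable fun y hy ↦ ?_
  exact (hq.dist_le_mul y x).trans (by gcongr; exact (Metric.mem_ball.mp hy).le)

theorem HasSpectralGap.mul_variance_le_of_lipschitzWith {Λ : ℝ} (hgap : HasSpectralGap μ Λ)
    (hq : LipschitzWith K q) (hq2 : MemLp q 2 μ) : Λ * Var[q; μ] ≤ K ^ 2 := by
  have hsmooth (φ : ContDiffBump (0 : E)) : ContDiff ℝ 1 (mollify φ q) :=
    (contDiff_mollify hq.continuous.locallyIntegrable).of_le (by norm_num)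
  have hgrad (φ : ContDiffBump (0 : E)) (x : E) : ‖∇ (mollify φ q) x‖ ≤ K := by
    rw [norm_gradient_eq_norm_fderiv]
    exact norm_fderiv_le_of_lipschitz ℝ (lipschitzWith_mollify hq)
  have hbound : ∀ᶠ φ in smallBumps (E := E), ∀ x, |mollify φ q x| ≤ |q x| + K := by
    filter_upwards [eventually_rOut_lt one_pos] with φ hφ x
    have hclose := (abs_mollify_sub_le_of_lipschitzWith (φ := φ) hq x).trans
      (mul_le_of_le_one_right K.2 hφ.le)
    linarith [abs_sub_abs_le_abs_sub (mollify φ q x) (q x)]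
  have hB : MemLp (fun x ↦ |q x| + K) 2 μ := hq2.norm.add (memLp_const _)
  have hrOut : Tendsto (fun φ : ContDiffBump (0 : E) ↦ K * φ.rOut) smallBumps (𝓝 0) := by
    have h : Tendsto ContDiffBump.rOut (smallBumps (E := E)) (𝓝 0) := tendsto_comap
    simpa using h.const_mul (K : ℝ)
  have hlim (x : E) : Tendsto (fun φ ↦ mollify φ q x) smallBumps (𝓝 (q x)) :=
    tendsto_iff_dist_tendsto_zero.mpr (squeeze_zero (fun _ ↦ dist_nonneg)
      (fun φ ↦ abs_mollify_sub_le_of_lipschitzWith hq x) hrOut)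
  refine le_of_tendsto ((tendsto_variance_of_dominated
    (fun φ ↦ (hsmooth φ).continuous.aestronglyMeasurable) hB hbound hlim).const_mul Λ) ?_
  filter_upwards [hbound] with φ hφ
  have hdc := continuous_gradient (hsmooth φ)
  calc Λ * Var[mollify φ q; μ]
      ≤ ∫ x, ‖∇ (mollify φ q) x‖ ^ 2 ∂μ :=
        hgap _ (hsmooth φ) (hB.mono' (hsmooth φ).continuous.aestronglyMeasurable (.of_forall hφ))
          (.of_bound hdc.aestronglyMeasurable K (.of_forall (hgrad φ)))
    _ ≤ ∫ _, (K : ℝ) ^ 2 ∂μ :=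
        integral_mono_of_nonneg (.of_forall fun x ↦ by positivity) (integrable_const _)
          (.of_forall fun x ↦ pow_le_pow_left₀ (norm_nonneg _) (hgrad φ x) 2)
    _ = K ^ 2 := by simp

end LipschitzVariance

section Covariance

variable {Ω : Type*} [MeasurableSpace Ω] {μ : Measure Ω} [IsProbabilityMeasure μ] {f g r : Ω → ℝ}

theorem sq_covariance_le (hf : MemLp f 2 μ) (hg : MemLp g 2 μ) :
    cov[f, g; μ] ^ 2 ≤ Var[f; μ] * Var[g; μ] := by
  rw [variance_eq_integral hf.aemeasurable, variance_eq_integral hg.aemeasurable]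
  exact sq_integral_mul_le (hf.sub (memLp_const _)) (hg.sub (memLp_const _))

theorem mul_variance_add_le_integral_mul_sq {ρ₀ : ℝ} (hr : ∀ x, ρ₀ ≤ r x) (hr2 : MemLp r 2 μ)
    (hg2 : MemLp g 2 μ) (hrg : Integrable (fun x ↦ r x * g x ^ 2) μ) :
    ρ₀ * Var[g; μ] + μ[g] ^ 2 * μ[r] + 2 * μ[g] * cov[r, g; μ] ≤ ∫ x, r x * g x ^ 2 ∂μ := by
  rw [covariance_eq_sub hr2 hg2, variance_eq_integral hg2.aemeasurable]
  set c := μ[g]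
  have hcross : Integrable (fun x ↦ r x * g x) μ := hr2.integrable_mul hg2
  have hr1 : Integrable r μ := hr2.integrable one_le_two
  have hexpand : (fun x ↦ r x * (g x - c) ^ 2) =
      fun x ↦ r x * g x ^ 2 - 2 * c * (r x * g x) + c ^ 2 * r x := by
    ext x
    ring
  have hsub : Integrable (fun x ↦ r x * g x ^ 2 - 2 * c * (r x * g x)) μ :=
    hrg.sub (hcross.const_mul _)
  have hmono : ∫ x, ρ₀ * (g x - c) ^ 2 ∂μ ≤ ∫ x, r x * (g x - c) ^ 2 ∂μ := by
    refine integral_mono ((hg2.sub (memLp_const c)).integrable_sq.const_mul ρ₀) ?_ fun x ↦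
      mul_le_mul_of_nonneg_right (hr x) (sq_nonneg _)
    rw [hexpand]
    exact hsub.add (hr1.const_mul _)
  rw [hexpand, integral_add hsub (hr1.const_mul _), integral_sub hrg (hcross.const_mul _)] at hmono
  simp only [integral_const_mul] at hmono
  simp only [Pi.mul_apply]
  linarith

end Covariance

theorem mul_sq_add_two_mul_add_mul_nonneg {A B M c s t : ℝ} (hA : 0 < A) (hs : 0 ≤ s)
    (ht : t ^ 2 ≤ M * s) (hM : M ≤ A * B) : 0 ≤ A * c ^ 2 + 2 * c * t + B * s := by
  refine nonneg_of_mul_nonneg_right ?_ hA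
  calc 0 ≤ (A * c + t) ^ 2 + (A * B * s - t ^ 2) :=
        add_nonneg (sq_nonneg _) (sub_nonneg.mpr (ht.trans (by gcongr)))
    _ = A * (A * c ^ 2 + 2 * c * t + B * s) := by ring

section SelfImprovement

variable {E : Type*} [NormedAddCommGroup E] [InnerProductSpace ℝ E] [FiniteDimensional ℝ E]
  [MeasurableSpace E] [BorelSpace E] {μ : Measure E} {q : E → ℝ} {Λ ρ₀ θ η : ℝ} {K : ℝ≥0}

theorem HasSpectralGap.add_mul_integral_sq_le [IsProbabilityMeasure μ] (hgap : HasSpectralGap μ Λ)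
    (hΛ : 0 < Λ) (hq : LipschitzWith K q) (hq2 : MemLp q 2 μ) (hqρ₀ : ∀ x, ρ₀ ≤ q x)
    (hθ : θ ∈ Icc 0 1) (hA : 0 < θ * (μ[q] - ρ₀) - (Λ - ρ₀) - η)
    (hAB : θ ^ 2 * K ^ 2 / Λ ≤ (θ * (μ[q] - ρ₀) - (Λ - ρ₀) - η) * (ρ₀ - η))
    {g : E → ℝ} (hg : IsTestFunction g) :
    (Λ + η) * ∫ x, g x ^ 2 ∂μ ≤ (∫ x, ‖∇ g x‖ ^ 2 ∂μ) + ∫ x, q x * g x ^ 2 ∂μ := by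
  have hgc := hg.contDiff.continuous
  have hg2 : MemLp g 2 μ := hg.memLp
  have hqg : Integrable (fun x ↦ q x * g x ^ 2) μ := by
    simp_rw [sq]
    exact (hq.continuous.mul (hgc.mul hgc)).integrable_of_hasCompactSupport
      hg.hasCompactSupport.mul_left.mul_left
  have hpoincare : Λ * Var[g; μ] ≤ ∫ x, ‖∇ g x‖ ^ 2 ∂μ :=
    hgap g (hg.contDiff_nat 1) hg2 hg.memLp_gradient
  have hvar : Var[g; μ] = (∫ x, g x ^ 2 ∂μ) - μ[g] ^ 2 := variance_eq_sub hg2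
  have hweight := mul_variance_add_le_integral_mul_sq hqρ₀ hq2 hg2 hqg
  have hfloor : ρ₀ * ∫ x, g x ^ 2 ∂μ ≤ ∫ x, q x * g x ^ 2 ∂μ := by
    rw [← integral_const_mul]
    exact integral_mono (hg2.integrable_sq.const_mul ρ₀) hqg fun x ↦
      mul_le_mul_of_nonneg_right (hqρ₀ x) (sq_nonneg _)
  have hcov : (θ * cov[q, g; μ]) ^ 2 ≤ θ ^ 2 * K ^ 2 / Λ * Var[g; μ] := by
    have hK : Var[q; μ] ≤ K ^ 2 / Λ :=
      (le_div_iff₀' hΛ).mpr (hgap.mul_variance_le_of_lipschitzWith hq hq2)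
    calc (θ * cov[q, g; μ]) ^ 2 = θ ^ 2 * cov[q, g; μ] ^ 2 := mul_pow _ _ _
      _ ≤ θ ^ 2 * (K ^ 2 / Λ * Var[g; μ]) := by
          gcongr
          exact (sq_covariance_le hq2 hg2).trans
            (mul_le_mul_of_nonneg_right hK (variance_nonneg g μ))
      _ = θ ^ 2 * K ^ 2 / Λ * Var[g; μ] := by ring
  have hquad := mul_sq_add_two_mul_add_mul_nonneg (c := μ[g]) hA (variance_nonneg g μ) hcov hAB
  have hθweight := mul_le_mul_of_nonneg_left hweight hθ.1
  have hθfloor := mul_le_mul_of_nonneg_left hfloor (sub_nonneg.mpr hθ.2)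
  rw [hvar] at hpoincare hquad hθweight
  linarith

end SelfImprovement

theorem memLp_of_lipschitzWith {E : Type*} [NormedAddCommGroup E] [MeasurableSpace E]
    {μ : Measure E} [IsFiniteMeasure μ] {q : E → ℝ} {K : ℝ≥0} (hq : LipschitzWith K q)
    (hid : MemLp id 2 μ) : MemLp q 2 μ := by
  have hq0 : LipschitzWith K fun x ↦ q x - q 0 := by simpa using hq.sub (LipschitzWith.const (q 0))
  have hadd := (hq0.comp_memLp (sub_self _) hid).add (memLp_const (q 0))
  rwa [show (fun x ↦ q x - q 0) ∘ id + (fun _ ↦ q 0) = q by ext; simp] at hadd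

theorem le_iteratedFDeriv_two_of_le {E : Type*} [NormedAddCommGroup E] [NormedSpace ℝ E]
    {V q : E → ℝ} {ρ₀ : ℝ} (hqρ₀ : ∀ x, ρ₀ ≤ q x)
    (hHess : ∀ x u, q x * ‖u‖ ^ 2 ≤ iteratedFDeriv ℝ 2 V x ![u, u]) (x u : E) :
    ρ₀ * ‖u‖ ^ 2 ≤ iteratedFDeriv ℝ 2 V x ![u, u] :=
  (mul_le_mul_of_nonneg_right (hqρ₀ x) (sq_nonneg _)).trans (hHess x u)

section GibbsSelfImprovement

variable {E : Type*} [NormedAddCommGroup E] [InnerProductSpace ℝ E] [FiniteDimensional ℝ E]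
  [MeasurableSpace E] [BorelSpace E] {V q : E → ℝ} {Λ ρ₀ θ : ℝ} {K : ℝ≥0}

theorem HasSpectralGap.exists_gt (hV : ContDiff ℝ 2 V) (hq : LipschitzWith K q)
    (hHess : ∀ x u, q x * ‖u‖ ^ 2 ≤ iteratedFDeriv ℝ 2 V x ![u, u]) (hρ₀ : 0 < ρ₀)
    (hqρ₀ : ∀ x, ρ₀ ≤ q x) (hθ : θ ∈ Icc 0 1) (hgap : HasSpectralGap (gibbsMeasure V) Λ)
    (hρ₀Λ : ρ₀ ≤ Λ)
    (hΛ : Λ < ρ₀ + (θ * ((∫ x, q x ∂gibbsMeasure V) - ρ₀) - θ ^ 2 * K ^ 2 / ρ₀ ^ 2)) :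
    ∃ Λ' > Λ, HasSpectralGap (gibbsMeasure V) Λ' := by
  have hHess₀ := le_iteratedFDeriv_two_of_le hqρ₀ hHess
  have hint := integrable_exp_neg_of_le_iteratedFDeriv_two hV hρ₀ hHess₀
  have : IsProbabilityMeasure (gibbsMeasure V) := isProbabilityMeasure_tilted hint
  have hq2 := memLp_of_lipschitzWith hq (memLp_id_gibbsMeasure hV hρ₀ hHess₀)
  have hΛ0 := hρ₀.trans_le hρ₀Λ
  set s := θ * ((∫ x, q x ∂gibbsMeasure V) - ρ₀) - (Λ - ρ₀)
  have hs : θ ^ 2 * K ^ 2 / ρ₀ ^ 2 < s := by linarith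
  have hs0 : 0 < s := hs.trans_le' (by positivity)
  have hsρ₀ : θ ^ 2 * K ^ 2 / Λ < s * ρ₀ := calc
    θ ^ 2 * K ^ 2 / Λ ≤ θ ^ 2 * K ^ 2 / ρ₀ := by gcongr
    _ = θ ^ 2 * K ^ 2 / ρ₀ ^ 2 * ρ₀ := by field_simp
    _ < s * ρ₀ := by gcongr
  have hA : ∀ᶠ η in 𝓝[>] 0, 0 < s - η :=
    nhdsWithin_le_nhds <| (by fun_prop : ContinuousAt (fun η ↦ s - η) 0).eventually_const_lt
      (by simpa using hs0)
  have hAB : ∀ᶠ η in 𝓝[>] 0, θ ^ 2 * K ^ 2 / Λ < (s - η) * (ρ₀ - η) :=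
    nhdsWithin_le_nhds <|
      (by fun_prop : ContinuousAt (fun η ↦ (s - η) * (ρ₀ - η)) 0).eventually_const_lt
        (by simpa using hsρ₀)
  obtain ⟨η, hη, hAη, hABη⟩ := (eventually_mem_nhdsWithin.and (hA.and hAB)).exists
  refine ⟨Λ + η, lt_add_of_pos_right Λ hη,
    hasSpectralGap_of_integral_generator_sq_ge hV hint (add_pos hΛ0 hη) fun u hu ↦
      mul_integral_sq_norm_gradient_le_integral_generator_sq hV hq.continuous hHess
        (fun g hg ↦ hgap.add_mul_integral_sq_le hΛ0 hq hq2 hqρ₀ hθ hAη hABη.le hg) hu⟩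

theorem hasSpectralGap_add_of_lipschitzWith (hV : ContDiff ℝ 2 V) (hq : LipschitzWith K q)
    (hHess : ∀ x u, q x * ‖u‖ ^ 2 ≤ iteratedFDeriv ℝ 2 V x ![u, u]) (hρ₀ : 0 < ρ₀)
    (hqρ₀ : ∀ x, ρ₀ ≤ q x) (hθ : θ ∈ Icc 0 1) :
    HasSpectralGap (gibbsMeasure V)
      (ρ₀ + (θ * ((∫ x, q x ∂gibbsMeasure V) - ρ₀) - θ ^ 2 * K ^ 2 / ρ₀ ^ 2)) := by
  set Λ₁ := ρ₀ + (θ * ((∫ x, q x ∂gibbsMeasure V) - ρ₀) - θ ^ 2 * K ^ 2 / ρ₀ ^ 2)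
  have hHess₀ := le_iteratedFDeriv_two_of_le hqρ₀ hHess
  have hbase : HasSpectralGap (gibbsMeasure V) ρ₀ := hasSpectralGap_of_le_iteratedFDeriv_two hV
    (integrable_exp_neg_of_le_iteratedFDeriv_two hV hρ₀ hHess₀) hρ₀ hHess₀
  rcases le_total Λ₁ ρ₀ with hle | hle
  · exact hbase.mono hle
  · refine IsClosed.Icc_subset_of_forall_exists_gt
      (isClosed_setOf_hasSpectralGap.inter isClosed_Icc) hbase ?_ (right_mem_Icc.mpr hle)
    rintro Λ ⟨hgap, hρ₀Λ, hΛ⟩ y (hy : Λ < y)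
    obtain ⟨Λ', hΛ', hgap'⟩ := HasSpectralGap.exists_gt hV hq hHess hρ₀ hqρ₀ hθ hgap hρ₀Λ hΛ
    exact ⟨min Λ' y, hgap'.mono (min_le_left _ _), lt_min hΛ' hy, min_le_right _ _⟩

end GibbsSelfImprovement

section Constant

variable {a b : ℝ}

theorem mul_one_sub_sqrt_eq (hab : 0 < b) :
    b * (1 - √(1 - a ^ 2 / b ^ 2)) = b - √(b ^ 2 - a ^ 2) := by
  have hfactor : b ^ 2 - a ^ 2 = b ^ 2 * (1 - a ^ 2 / b ^ 2) := by field_simp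
  rw [hfactor, sqrt_mul (sq_nonneg b), sqrt_sq hab.le]
  ring

theorem mul_one_sub_sqrt_nonneg (hb : 0 ≤ b) : 0 ≤ b * (1 - √(1 - a ^ 2 / b ^ 2)) :=
  mul_nonneg hb (sub_nonneg.mpr (sqrt_le_one.mpr (sub_le_self 1 (by positivity))))

theorem exists_mem_Icc_mul_one_sub_sqrt_le (ha : 0 ≤ a) (hb : 0 < b) :
    ∃ θ ∈ Icc (0 : ℝ) 1,
      (a + b) * (1 - √(1 - a ^ 2 / (a + b) ^ 2)) ≤ θ * a - θ ^ 2 * (b / 4) := by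
  rw [mul_one_sub_sqrt_eq (by positivity)]
  rcases le_total (2 * a) b with hab | hab
  · -- The maximiser of the quadratic `θ ↦ θ * a - θ ^ 2 * (b / 4)`.
    refine ⟨2 * a / b, ⟨by positivity, (div_le_one hb).mpr hab⟩, ?_⟩
    have hmax : 2 * a / b * a - (2 * a / b) ^ 2 * (b / 4) = a ^ 2 / b := by
      field_simp
      ring
    rw [hmax, sub_le_comm]
    refine le_sqrt_of_sq_le ?_
    have hdiff : (a + b) ^ 2 - a ^ 2 - (a + b - a ^ 2 / b) ^ 2 =
        a ^ 2 / b ^ 2 * (b ^ 2 + 2 * a * b - a ^ 2) := by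
      field_simp
      ring
    have : 0 ≤ a ^ 2 / b ^ 2 * (b ^ 2 + 2 * a * b - a ^ 2) := by
      have : 0 ≤ b ^ 2 + 2 * a * b - a ^ 2 := by nlinarith
      positivity
    linarith
  · refine ⟨1, ⟨zero_le_one, le_rfl⟩, ?_⟩
    have : 5 / 4 * b ≤ √((a + b) ^ 2 - a ^ 2) := le_sqrt_of_sq_le (by nlinarith)
    linarith

end Constant

section Poincare

variable {E : Type*} [NormedAddCommGroup E] [InnerProductSpace ℝ E] [FiniteDimensional ℝ E]
  [MeasurableSpace E] [BorelSpace E]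

theorem stmt_1_general {V ρ : E → ℝ} (hV : ContDiff ℝ 2 V) {L : ℝ≥0} (hL : 0 < L)
    (hρ : LipschitzWith L ρ) (hHess : ∀ x u, ρ x * ‖u‖ ^ 2 ≤ iteratedFDeriv ℝ 2 V x ![u, u])
    {ρ₀ : ℝ} (hρ₀pos : 0 < ρ₀) (hρ₀ : ∀ x, ρ₀ ≤ ρ x)
    {m : ℝ} (hm : m = ∫ x, ρ x ∂gibbsMeasure V) {ε' : ℝ}
    (hε' : ε' = ((m - ρ₀) + 4 * L ^ 2 / ρ₀ ^ 2) *
      (1 - √(1 - (m - ρ₀) ^ 2 / ((m - ρ₀) + 4 * L ^ 2 / ρ₀ ^ 2) ^ 2)))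
    {f : E → ℝ} (hf : ContDiff ℝ 1 f) (hf2 : MemLp f 2 (gibbsMeasure V))
    (hdf2 : MemLp (∇ f) 2 (gibbsMeasure V)) :
    Var[f; gibbsMeasure V] ≤ (1 / (ρ₀ + ε')) * ∫ x, ‖∇ f x‖ ^ 2 ∂gibbsMeasure V := by
  have hL2 : (0 : ℝ) < 4 * L ^ 2 / ρ₀ ^ 2 := by positivity
  have hHess₀ := le_iteratedFDeriv_two_of_le hρ₀ hHess
  have : IsProbabilityMeasure (gibbsMeasure V) :=
    isProbabilityMeasure_tilted (integrable_exp_neg_of_le_iteratedFDeriv_two hV hρ₀pos hHess₀)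
  have hρint : Integrable ρ (gibbsMeasure V) :=
    (memLp_of_lipschitzWith hρ (memLp_id_gibbsMeasure hV hρ₀pos hHess₀)).integrable one_le_two
  have hmρ₀ : 0 ≤ m - ρ₀ := by
    rw [hm, sub_nonneg]
    simpa using integral_mono (integrable_const ρ₀) hρint hρ₀
  have hε'0 : 0 ≤ ε' := hε' ▸ mul_one_sub_sqrt_nonneg (by positivity)
  obtain ⟨θ, hθ, hθε'⟩ := exists_mem_Icc_mul_one_sub_sqrt_le hmρ₀ hL2
  have hgap : HasSpectralGap (gibbsMeasure V) (ρ₀ + ε') := by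
    refine (hasSpectralGap_add_of_lipschitzWith hV hρ hHess hρ₀pos hρ₀ hθ).mono ?_
    have hquarter : θ ^ 2 * (4 * (L : ℝ) ^ 2 / ρ₀ ^ 2 / 4) = θ ^ 2 * L ^ 2 / ρ₀ ^ 2 := by ring
    rw [hε', ← hm, ← hquarter]
    gcongr
  rw [one_div_mul_eq_div, le_div_iff₀' (by positivity)]
  exact hgap f hf hf2 hdf2

end Poincare

end

/-- Self-improved Bakry–Émery bound for the Poincaré constant under a
variable positive curvature lower bound, Lipschitz version. -/
theorem stmt_1 {n : ℕ} (V ρ : EuclideanSpace ℝ (Fin n) → ℝ)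
    (hV : ContDiff ℝ 2 V)
    (hVint : Integrable (fun x => Real.exp (-V x)))
    (μ : Measure (EuclideanSpace ℝ (Fin n)))
    (hμ : μ = volume.withDensity
      (fun x => ENNReal.ofReal (Real.exp (-V x) / ∫ y, Real.exp (-V y))))
    (Lip : ℝ) (hLippos : 0 < Lip)
    (hLip : ∀ x y, |ρ x - ρ y| ≤ Lip * ‖x - y‖)
    (hHess : ∀ x u, ρ x * ‖u‖ ^ 2 ≤ iteratedFDeriv ℝ 2 V x ![u, u])
    (ρ₀ : ℝ) (hρ₀pos : 0 < ρ₀) (hρ₀ : ∀ x, ρ₀ ≤ ρ x)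
    (m : ℝ) (hm : m = ∫ x, ρ x ∂μ)
    (ε' : ℝ)
    (hε' : ε' = ((m - ρ₀) + 4 * Lip ^ 2 / ρ₀ ^ 2) *
      (1 - Real.sqrt (1 - (m - ρ₀) ^ 2 / ((m - ρ₀) + 4 * Lip ^ 2 / ρ₀ ^ 2) ^ 2))) :
    ∀ f : EuclideanSpace ℝ (Fin n) → ℝ, ContDiff ℝ (⊤ : ℕ∞) f → HasCompactSupport f →
      ∫ x, f x ^ 2 ∂μ - (∫ x, f x ∂μ) ^ 2 ≤
        (1 / (ρ₀ + ε')) * ∫ x, ‖gradient f x‖ ^ 2 ∂μ := by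
  intro f hf hfc
  have hμV : μ = gibbsMeasure V := hμ
  have htest : IsTestFunction f := ⟨hf, hfc⟩
  have hρ : LipschitzWith ⟨Lip, hLippos.le⟩ ρ := LipschitzWith.of_dist_le_mul fun x y ↦ by
    rw [dist_eq_norm, dist_eq_norm]
    exact hLip x y
  rw [hμV] at hm ⊢
  have : IsProbabilityMeasure (gibbsMeasure V) := isProbabilityMeasure_tilted hVint
  have h := stmt_1_general hV hLippos hρ hHess hρ₀pos hρ₀ hm hε' (hf.of_le (by norm_num))
    htest.memLp htest.memLp_gradient
  rwa [ProbabilityTheory.variance_eq_sub htest.memLp] at h
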